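/- Let F₀ be a field of characteristic 0 that is finitely generated over ℚ. Then the set of triples (a, b, [Z₁ : Z₂ : Z₃]) with a, b ∈ ℤ and [Z₁ : Z₂ : Z₃] ∈ ℙ²(F₀) satisfying Z₁³ + Z₂³ + 9Z₃³ = 0, 3^a Z₁ + 3^b Z₂ + Z₃ = 0, and Z₁Z₂Z₃ ≠ 0, is finite. (Equivalently, all solutions of this system with a, b ∈ ℤ lie, with finitely many exceptions, in the set {(m, m, [1 : −1 : 0]) : m ∈ ℤ}.) -/

import Mathlib

section PadePart
open Polynomial

lemma xs_exists_antideriv {K : Type*} [Field K] [CharZero K] (p : K[X]) :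
    ∃ F : K[X], derivative F = p := by
  induction p using Polynomial.induction_on' with
  | add p q hp hq =>
    obtain ⟨F, hF⟩ := hp
    obtain ⟨G, hG⟩ := hq
    exact ⟨F + G, by simp [hF, hG]⟩
  | monomial n a =>
    refine ⟨monomial (n + 1) (a / ((n : K) + 1)), ?_⟩
    rw [derivative_monomial]
    have : ((n : K) + 1) ≠ 0 := by exact_mod_cast Nat.succ_ne_zero n
    simp only [Nat.add_sub_cancel]
    congr 1
    push_cast
    field_simp

lemma xs_const_of_deriv {K : Type*} [Field K] [CharZero K] (F : K[X]) (h : derivative F = 0)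
    (x y : K) : F.eval x = F.eval y := by
  have := derivative_eq_zero.mp h
  rw [eq_C_of_natDegree_eq_zero this]
  simp

lemma xs_beta {K : Type*} [Field K] [CharZero K] (α β : K) (q : ℕ) : ∀ (p : ℕ) (G : K[X]),
    derivative G = (X - C α) ^ p * (X - C β) ^ q →
    (G.eval β - G.eval α) * ((p + q + 1).factorial : K) =
      (-1) ^ q * (β - α) ^ (p + q + 1) * (p.factorial * q.factorial : K) := by
  induction q with
  | zero =>
    intro p G hG
    have hp : ((p : K) + 1) ≠ 0 := by exact_mod_cast Nat.succ_ne_zero p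
    have h0 : derivative (C ((p : K) + 1) * G - (X - C α) ^ (p + 1)) = 0 := by
      rw [derivative_sub, derivative_C_mul, hG, derivative_X_sub_C_pow]
      simp
    have := xs_const_of_deriv _ h0 β α
    simp at this
    have e : (p + 0 + 1).factorial = (p + 1) * p.factorial := by simp [Nat.factorial_succ]
    rw [e]
    push_cast
    simp
    linear_combination (p.factorial : K) * this
  | succ q ih =>
    intro p G hG
    have hp : ((p : K) + 1) ≠ 0 := by exact_mod_cast Nat.succ_ne_zero p
    have hq : ((q : K) + 1) ≠ 0 := by exact_mod_cast Nat.succ_ne_zero q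
    set G2 : K[X] := C (((q : K) + 1)⁻¹) * ((X - C α) ^ (p + 1) * (X - C β) ^ (q + 1)
      - C ((p : K) + 1) * G) with hG2
    have h2 : derivative G2 = (X - C α) ^ (p + 1) * (X - C β) ^ q := by
      have e1 : C (((q : K) + 1)⁻¹) * C ((q : K) + 1) = 1 := by
        rw [← C_mul, inv_mul_cancel₀ hq, C_1]
      rw [hG2, derivative_C_mul, derivative_sub, derivative_C_mul, hG, derivative_mul,
        derivative_X_sub_C_pow, derivative_X_sub_C_pow]
      simp only [Nat.add_sub_cancel, Nat.cast_add, Nat.cast_one, C_add, C_1, map_natCast] at e1 ⊢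
      linear_combination (X - C α) ^ (p + 1) * (X - C β) ^ q * e1
    have h3 := ih (p + 1) G2 h2
    have e1 : (G2.eval β - G2.eval α) * ((q : K) + 1) = - ((p : K) + 1) * (G.eval β - G.eval α) := by
      simp [hG2]
      field_simp
      ring
    have e2 : (p + (q + 1) + 1) = (p + 1 + q + 1) := by ring
    rw [e2]
    rw [Nat.factorial_succ q]
    rw [Nat.factorial_succ p] at h3
    push_cast at h3 ⊢
    apply mul_left_cancel₀ hp
    linear_combination ((p+1+q+1).factorial : K) * e1 - ((q:K)+1) * h3

lemma xs_coef (p q r k : ℕ) (hk : k ≤ r) :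
    (p + q + r + 1).factorial * r.choose k * ((p + k).factorial * q.factorial) =
    (p + k).choose k * (p + q + r + 1).choose (r - k) * (p + q + k + 1).factorial *
      (p.factorial * q.factorial * r.factorial) := by
  obtain ⟨s, rfl⟩ := Nat.exists_eq_add_of_le hk
  have h1 := Nat.choose_mul_factorial_mul_factorial (n := k + s) (k := k) (by omega)
  have h2 := Nat.choose_mul_factorial_mul_factorial (n := p + k) (k := k) (by omega)
  have h3 := Nat.choose_mul_factorial_mul_factorial (n := p + q + (k + s) + 1) (k := s) (by omega)
  have e1 : k + s - k = s := by omega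
  have e2 : p + k - k = p := by omega
  have e3 : p + q + (k + s) + 1 - s = p + q + k + 1 := by omega
  rw [e1] at h1 ⊢
  rw [e2] at h2
  rw [e3] at h3
  rw [← h1, ← h2, ← h3]
  ring

lemma xs_incr {K : Type*} [Field K] [CharZero K] (α β γ : K) (p q r : ℕ) (F : K[X])
    (hF : derivative F * C ((p.factorial * q.factorial * r.factorial : ℕ) : K) =
      C ((p + q + r + 1).factorial : K) * ((X - C α) ^ p * (X - C β) ^ q * (X - C γ) ^ r)) :
    F.eval β - F.eval α = (-1) ^ q * (β - α) ^ (p + q + 1) *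
      ∑ k ∈ Finset.range (r + 1), (((p + k).choose k * (p + q + r + 1).choose (r - k) : ℕ) : K) *
        (α - γ) ^ (r - k) * (β - α) ^ k := by
  choose G hG using fun k : ℕ => xs_exists_antideriv ((X - C α) ^ (p + k) * (X - C β) ^ q)
  have hexp : (X - C γ) ^ r = ∑ k ∈ Finset.range (r + 1),
      (X - C α) ^ k * C (α - γ) ^ (r - k) * (r.choose k : K[X]) := by
    rw [← add_pow]
    congr 1
    simp
  have h0 : derivative (F * C ((p.factorial * q.factorial * r.factorial : ℕ) : K) -
      C ((p + q + r + 1).factorial : K) * ∑ k ∈ Finset.range (r + 1),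
        C ((α - γ) ^ (r - k) * (r.choose k : K)) * G k) = 0 := by
    rw [derivative_sub, derivative_mul, derivative_C, mul_zero, add_zero, hF, hexp,
      derivative_C_mul, derivative_sum]
    rw [sub_eq_zero]
    congr 1
    rw [Finset.mul_sum]
    apply Finset.sum_congr rfl
    intro k _
    rw [derivative_C_mul, hG]
    simp only [C_mul, C_pow, map_natCast]
    ring
  have h1 := xs_const_of_deriv _ h0 β α
  have hne : ((p.factorial * q.factorial * r.factorial : ℕ) : K) ≠ 0 := by
    exact_mod_cast (by positivity)
  apply mul_right_cancel₀ hne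
  simp only [eval_sub, eval_mul, eval_C, eval_finsetSum] at h1
  have h2 : (eval β F - eval α F) * ((p.factorial * q.factorial * r.factorial : ℕ) : K) =
     ((p + q + r + 1).factorial : K) * ∑ k ∈ Finset.range (r + 1),
        ((α - γ) ^ (r - k) * (r.choose k : K)) * (eval β (G k) - eval α (G k)) := by
    simp only [mul_sub, Finset.sum_sub_distrib]
    linear_combination h1
  rw [h2, Finset.mul_sum, Finset.mul_sum, Finset.sum_mul]
  apply Finset.sum_congr rfl
  intro k hk
  have hk' : k ≤ r := by simp at hk; omega
  have hb := xs_beta α β q (p + k) (G k) (hG k)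
  have hc := congrArg (fun n : ℕ => (n : K)) (xs_coef p q r k hk')
  have hne2 : ((p + k + q + 1).factorial : K) ≠ 0 := by
    exact_mod_cast (by positivity)
  have e : p + q + k + 1 = p + k + q + 1 := by ring
  rw [e] at hc
  apply mul_right_cancel₀ hne2
  push_cast at hc ⊢
  have e2 : (β - α) ^ (p + k + q + 1) = (β - α) ^ (p + q + 1) * (β - α) ^ k := by
    rw [← pow_add]; congr 1; ring
  rw [e2] at hb
  linear_combination ((p+q+r+1).factorial : K) * (α - γ) ^ (r - k) * (r.choose k : K) * hb +
    (α - γ) ^ (r - k) * (-1) ^ q * (β - α) ^ (p + q + 1) * (β - α) ^ k * hc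

end PadePart


section PadePart2
open Polynomial

/-- the explicit increments -/
def xsS {K : Type*} [Field K] (p q r : ℕ) (u z : K) : K :=
  (-1) ^ q * z ^ (p + q + 1) *
      ∑ k ∈ Finset.range (r + 1), (((p + k).choose k * (p + q + r + 1).choose (r - k) : ℕ) : K) *
        u ^ (r - k) * z ^ k

lemma xsS_mem {K : Type*} [Field K] (O : Subring K) (p q r : ℕ) (u z : K) (hu : u ∈ O)
    (hz : z ∈ O) : xsS p q r u z ∈ O := by
  unfold xsS
  refine O.mul_mem (O.mul_mem (O.pow_mem (O.neg_mem O.one_mem) _) (O.pow_mem hz _)) ?_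
  refine O.sum_mem fun k _ => O.mul_mem (O.mul_mem (natCast_mem O _) (O.pow_mem hu _))
    (O.pow_mem hz _)

lemma xs_coefsum (p q r N : ℕ) (hp : p ≤ N + 1) (hq : q ≤ N + 1) (hr : r ≤ N + 1) :
    ∑ k ∈ Finset.range (r + 1), ((p + k).choose k * (p + q + r + 1).choose (r - k)) ≤
      256 ^ (N + 1) := by
  have h1 : ∀ k ∈ Finset.range (r + 1), ((p + k).choose k * (p + q + r + 1).choose (r - k)) ≤
      2 ^ (5 * N + 6) := by
    intro k hk
    have hk' : k ≤ r := by simp at hk; omega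
    calc _ ≤ 2 ^ (p + k) * 2 ^ (p + q + r + 1) :=
          Nat.mul_le_mul (Nat.choose_le_two_pow _ _) (Nat.choose_le_two_pow _ _)
      _ = 2 ^ (p + k + (p + q + r + 1)) := by rw [← pow_add]
      _ ≤ 2 ^ (5 * N + 6) := Nat.pow_le_pow_right (by norm_num) (by omega)
  calc _ ≤ ∑ k ∈ Finset.range (r + 1), 2 ^ (5 * N + 6) := Finset.sum_le_sum h1
    _ = (r + 1) * 2 ^ (5 * N + 6) := by simp
    _ ≤ 2 ^ (N + 2) * 2 ^ (5 * N + 6) := by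
        gcongr
        have := Nat.lt_two_pow_self (n := N + 2)
        omega
    _ = 2 ^ (6 * N + 8) := by rw [← pow_add]; congr 1; ring
    _ ≤ 2 ^ (8 * (N + 1)) := Nat.pow_le_pow_right (by norm_num) (by omega)
    _ = 256 ^ (N + 1) := by rw [pow_mul]; norm_num

lemma xsS_bound {K : Type*} [Field K] (p q r N : ℕ) (hp : p ≤ N + 1) (hq : q ≤ N + 1)
    (hr : r ≤ N + 1) (u z : K) (v : AbsoluteValue K ℝ) (H : ℝ) (hu : v u ≤ H) (hz : v z ≤ H) :
    v (xsS p q r u z) ≤ 256 ^ (N + 1) * v z ^ (p + q + 1) * H ^ r := by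
  have hH : 0 ≤ H := (v.nonneg u).trans hu
  unfold xsS
  rw [map_mul, map_mul, map_pow, map_pow, v.map_neg, map_one, one_pow, one_mul]
  have : v (∑ k ∈ Finset.range (r + 1), (((p + k).choose k * (p + q + r + 1).choose (r - k) : ℕ) : K) *
        u ^ (r - k) * z ^ k) ≤ 256 ^ (N + 1) * H ^ r := by
    refine (v.sum_le _ _).trans ?_
    calc _ ≤ ∑ k ∈ Finset.range (r + 1), (((p + k).choose k * (p + q + r + 1).choose (r - k) : ℕ) : ℝ) * H ^ r := by
          apply Finset.sum_le_sum
          intro k hk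
          have hk' : k ≤ r := by simp at hk; omega
          rw [map_mul, map_mul, map_pow, map_pow, mul_assoc]
          have e : H ^ r = H ^ (r - k) * H ^ k := by rw [← pow_add]; congr 1; omega
          rw [e]
          have := v.nonneg u
          have := v.nonneg z
          gcongr
          exact v.apply_nat_le_self _
      _ = ((∑ k ∈ Finset.range (r + 1), ((p + k).choose k * (p + q + r + 1).choose (r - k)) : ℕ) : ℝ) * H ^ r := by
          rw [← Finset.sum_mul, Nat.cast_sum]
      _ ≤ _ := by
          gcongr
          exact_mod_cast xs_coefsum p q r N hp hq hr
  calc _ ≤ v z ^ (p + q + 1) * (256 ^ (N + 1) * H ^ r) := by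
        have := v.nonneg z
        gcongr
    _ = _ := by ring

lemma xs_incr' {K : Type*} [Field K] [CharZero K] (α β γ : K) (p q r : ℕ) :
    ∃ F : K[X], ∃ c : K, c ≠ 0 ∧
      derivative F = C c * ((X - C α) ^ p * (X - C β) ^ q * (X - C γ) ^ r) ∧
      F.eval β - F.eval α = xsS p q r (α - γ) (β - α) ∧
      F.eval γ - F.eval β = xsS q r p (β - α) (γ - β) ∧
      F.eval α - F.eval γ = xsS r p q (γ - β) (α - γ) := by
  have hne : ((p.factorial * q.factorial * r.factorial : ℕ) : K) ≠ 0 := by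
    exact_mod_cast (by positivity)
  have hne2 : ((p + q + r + 1).factorial : K) ≠ 0 := by
    exact_mod_cast (by positivity)
  obtain ⟨F, hF⟩ := xs_exists_antideriv (C (((p + q + r + 1).factorial : K) /
    ((p.factorial * q.factorial * r.factorial : ℕ) : K)) *
     ((X - C α) ^ p * (X - C β) ^ q * (X - C γ) ^ r))
  have h1 : derivative F * C ((p.factorial * q.factorial * r.factorial : ℕ) : K) =
      C ((p + q + r + 1).factorial : K) * ((X - C α) ^ p * (X - C β) ^ q * (X - C γ) ^ r) := by
    rw [hF, mul_right_comm, ← C_mul, div_mul_cancel₀ _ hne]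
  refine ⟨F, _, div_ne_zero hne2 hne, hF, ?_, ?_, ?_⟩
  · exact xs_incr α β γ p q r F h1
  · apply xs_incr β γ α q r p F
    have e1 : q.factorial * r.factorial * p.factorial = p.factorial * q.factorial * r.factorial := by ring
    have e2 : q + r + p + 1 = p + q + r + 1 := by ring
    rw [e1, e2, h1]
    ring
  · apply xs_incr γ α β r p q F
    have e1 : r.factorial * p.factorial * q.factorial = p.factorial * q.factorial * r.factorial := by ring
    have e2 : r + p + q + 1 = p + q + r + 1 := by ring
    rw [e1, e2, h1]
    ring

lemma xs_root_pow {K : Type*} [Field K] [CharZero K] (Q : K[X]) (hQ : Q ≠ 0) (α : K) (N : ℕ)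
    (h0 : Q.IsRoot α) (h : (X - C α) ^ N ∣ derivative Q) : (X - C α) ^ (N + 1) ∣ Q := by
  have h1 := derivative_rootMultiplicity_of_root h0
  have hd : derivative Q ≠ 0 := by
    intro h2
    have := derivative_eq_zero.mp h2
    rw [eq_C_of_natDegree_eq_zero this] at h0 hQ
    simp at h0 hQ
    exact hQ h0
  have h2 := (le_rootMultiplicity_iff hd).mpr h
  have h3 := (rootMultiplicity_pos hQ).mpr h0
  exact (le_rootMultiplicity_iff hQ).mp (by omega)

lemma xs_indep {K : Type*} [Field K] [CharZero K] (α β γ : K) (hab : α ≠ β) (hbc : β ≠ γ)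
    (hca : γ ≠ α) (N : ℕ) (P : K[X]) (g : K[X]) (hg : g.natDegree ≤ 1)
    (hP : derivative P = g * ((X - C α) ^ N * (X - C β) ^ N * (X - C γ) ^ N))
    (h1 : P.eval β = P.eval α) (h2 : P.eval γ = P.eval α) : g = 0 := by
  set Q := P - C (P.eval α) with hQ
  have hQ' : derivative Q = g * ((X - C α) ^ N * (X - C β) ^ N * (X - C γ) ^ N) := by
    simp [hQ, hP]
  have hprod : (X - C α) ^ N * (X - C β) ^ N * (X - C γ) ^ N ≠ 0 := by
    refine mul_ne_zero (mul_ne_zero ?_ ?_) ?_ <;> exact pow_ne_zero _ (X_sub_C_ne_zero _)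
  by_cases hz : Q = 0
  · rw [hz] at hQ'
    simp only [derivative_zero] at hQ'
    exact (mul_eq_zero.mp hQ'.symm).resolve_right hprod
  exfalso
  have da : (X - C α) ^ (N + 1) ∣ Q := by
    apply xs_root_pow Q hz
    · simp [hQ]
    · rw [hQ']; exact ⟨g * ((X - C β) ^ N * (X - C γ) ^ N), by ring⟩
  have db : (X - C β) ^ (N + 1) ∣ Q := by
    apply xs_root_pow Q hz
    · simp [hQ, h1]
    · rw [hQ']; exact ⟨g * ((X - C α) ^ N * (X - C γ) ^ N), by ring⟩
  have dc : (X - C γ) ^ (N + 1) ∣ Q := by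
    apply xs_root_pow Q hz
    · simp [hQ, h2]
    · rw [hQ']; exact ⟨g * ((X - C α) ^ N * (X - C β) ^ N), by ring⟩
  have cab : IsCoprime ((X - C α) ^ (N + 1)) ((X - C β) ^ (N + 1)) :=
    (isCoprime_X_sub_C_of_isUnit_sub (sub_ne_zero.mpr hab).isUnit).pow
  have cac : IsCoprime ((X - C α) ^ (N + 1)) ((X - C γ) ^ (N + 1)) :=
    (isCoprime_X_sub_C_of_isUnit_sub (sub_ne_zero.mpr hca.symm).isUnit).pow
  have cbc : IsCoprime ((X - C β) ^ (N + 1)) ((X - C γ) ^ (N + 1)) :=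
    (isCoprime_X_sub_C_of_isUnit_sub (sub_ne_zero.mpr hbc).isUnit).pow
  have dd := (cac.mul_left cbc).mul_dvd (cab.mul_dvd da db) dc
  have hdeg := natDegree_le_of_dvd dd hz
  have e1 : ((X - C α) ^ (N + 1) * (X - C β) ^ (N + 1) * (X - C γ) ^ (N + 1)).natDegree =
      3 * N + 3 := by
    rw [natDegree_mul (mul_ne_zero (pow_ne_zero _ (X_sub_C_ne_zero _)) (pow_ne_zero _ (X_sub_C_ne_zero _))) (pow_ne_zero _ (X_sub_C_ne_zero _)),
      natDegree_mul (pow_ne_zero _ (X_sub_C_ne_zero _)) (pow_ne_zero _ (X_sub_C_ne_zero _))]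
    simp only [natDegree_pow, natDegree_X_sub_C]
    ring
  have e2 : (derivative Q).natDegree = Q.natDegree - 1 := natDegree_derivative Q
  have e3 : (derivative Q).natDegree ≤ 3 * N + 1 := by
    rw [hQ']
    refine natDegree_mul_le.trans ?_
    have : ((X - C α) ^ N * (X - C β) ^ N * (X - C γ) ^ N).natDegree ≤ 3 * N := by
      refine natDegree_mul_le.trans ?_
      have := natDegree_mul_le (p := (X - C α) ^ N) (q := (X - C β) ^ N)
      simp only [natDegree_pow, natDegree_X_sub_C] at this ⊢
      omega
    omega
  omega

lemma xs_pade {K : Type*} [Field K] [CharZero K] (O : Subring K) (a b : Fin 3 → K)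
    (haO : ∀ j, a j ∈ O) (ha0 : ∀ j, a j ≠ 0) (ha : a 0 + a 1 + a 2 = 0)
    (hb : b 0 + b 1 + b 2 = 0) (hb0 : ∀ j, b j ≠ 0) (N : ℕ) :
    ∃ e : ℕ, (e = N ∨ e = N + 1) ∧ ∃ I : Fin 3 → K, (∀ j, I j ∈ O) ∧ I 0 + I 1 + I 2 = 0 ∧
      I 0 * b 1 - I 1 * b 0 ≠ 0 ∧
      ∀ (v : AbsoluteValue K ℝ) (H : ℝ), (∀ j, v (a j) ≤ H) →
        ∀ j, v (I j) ≤ 256 ^ (N + 1) * v (a j) ^ (2 * N + 1) * H ^ e := by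
  -- α = 0, β = a 2, γ = - a 1 ; β-α = a 2, γ-β = a 0, α-γ = a 1
  obtain ⟨F, c, hc, hF, f2, f0, f1⟩ := xs_incr' (0 : K) (a 2) (- a 1) N N N
  obtain ⟨F', c', hc', hF', f2', f0', f1'⟩ := xs_incr' (0 : K) (a 2) (- a 1) (N + 1) N N
  have e0 : - a 1 - a 2 = a 0 := by linear_combination -ha
  simp only [sub_zero, zero_sub, neg_neg, e0] at f2 f0 f1 f2' f0' f1'
  set I : Fin 3 → K := ![xsS N N N (a 2) (a 0), xsS N N N (a 0) (a 1), xsS N N N (a 1) (a 2)] with hI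
  set I' : Fin 3 → K := ![xsS N N (N+1) (a 2) (a 0), xsS N (N+1) N (a 0) (a 1), xsS (N+1) N N (a 1) (a 2)] with hI'
  have sI : I 0 + I 1 + I 2 = 0 := by
    simp only [hI, Matrix.cons_val_zero, Matrix.cons_val_one, Matrix.cons_val, ← f0, ← f1, ← f2]; ring
  have sI' : I' 0 + I' 1 + I' 2 = 0 := by
    simp only [hI', Matrix.cons_val_zero, Matrix.cons_val_one, Matrix.cons_val, ← f0', ← f1', ← f2']; ring
  by_cases h1 : I 0 * b 1 - I 1 * b 0 = 0
  · by_cases h2 : I' 0 * b 1 - I' 1 * b 0 = 0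
    · exfalso
      -- some nontrivial combination s I + s' I' vanishes
      obtain ⟨s, s', hs, k0, k1⟩ : ∃ s s' : K, (s ≠ 0 ∨ s' ≠ 0) ∧ s * I 0 + s' * I' 0 = 0 ∧
          s * I 1 + s' * I' 1 = 0 := by
        by_cases hz : I 0 = 0
        · refine ⟨1, 0, Or.inl one_ne_zero, by simp [hz], ?_⟩
          rw [hz] at h1
          have : I 1 = 0 := by
            have := hb0 0
            simp_all
          simp [this]
        · refine ⟨I' 0, - I 0, Or.inr (neg_ne_zero.mpr hz), by ring, ?_⟩
          apply mul_right_cancel₀ (hb0 0)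
          linear_combination I 0 * h2 - I' 0 * h1
      have k2 : s * I 2 + s' * I' 2 = 0 := by
        linear_combination s * sI + s' * sI' - k0 - k1
      have key := xs_indep (0 : K) (a 2) (- a 1) (ha0 2).symm
        (fun h => ha0 0 (by rw [← e0, ← h]; ring)) (neg_ne_zero.mpr (ha0 1)) N
        (C s * F + C s' * F') (C (s * c) + C (s' * c') * (X - C 0)) (by compute_degree)
        (by
          rw [derivative_add, derivative_C_mul, derivative_C_mul, hF, hF']
          simp only [C_mul]
          ring)
        (by
          simp only [eval_add, eval_mul, eval_C]
          simp only [hI, hI', Matrix.cons_val, ← f2, ← f2'] at k2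
          linear_combination k2)
        (by
          simp only [eval_add, eval_mul, eval_C]
          simp only [hI, hI', Matrix.cons_val, ← f1, ← f1'] at k1
          linear_combination -k1)
      have hc0 := congrArg (fun p => coeff p 0) key
      have hc1 := congrArg (fun p => coeff p 1) key
      simp [coeff_X, coeff_C] at hc0 hc1
      rcases hs with hs | hs
      · exact hs (hc0.resolve_right hc)
      · exact hs (hc1.resolve_right hc')
    · refine ⟨N + 1, Or.inr rfl, I', ?_, sI', h2, ?_⟩
      · intro j
        fin_cases j <;> exact xsS_mem O _ _ _ _ _ (haO _) (haO _)
      · intro v H hH j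
        have hH0 : 0 ≤ H := (v.nonneg _).trans (hH 0)
        have aux : ∀ z, v z ≤ H → 256 ^ (N + 1) * v z ^ (2 * N + 2) * H ^ N ≤
            256 ^ (N + 1) * v z ^ (2 * N + 1) * H ^ (N + 1) := by
          intro z hz
          have := v.nonneg z
          calc _ = 256 ^ (N + 1) * v z ^ (2 * N + 1) * (v z * H ^ N) := by ring
            _ ≤ 256 ^ (N + 1) * v z ^ (2 * N + 1) * (H * H ^ N) := by gcongr
            _ = _ := by ring
        fin_cases j
        · have := xsS_bound N N (N+1) N (by omega) (by omega) (by omega) (a 2) (a 0) v H (hH _) (hH _)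
          rw [show N + N + 1 = 2 * N + 1 by ring] at this
          exact this
        · have := xsS_bound N (N+1) N N (by omega) (by omega) (by omega) (a 0) (a 1) v H (hH _) (hH _)
          rw [show N + (N + 1) + 1 = 2 * N + 2 by ring] at this
          exact this.trans (aux _ (hH _))
        · have := xsS_bound (N+1) N N N (by omega) (by omega) (by omega) (a 1) (a 2) v H (hH _) (hH _)
          rw [show (N + 1) + N + 1 = 2 * N + 2 by ring] at this
          exact this.trans (aux _ (hH _))
  · refine ⟨N, Or.inl rfl, I, ?_, sI, h1, ?_⟩
    · intro j
      fin_cases j <;> exact xsS_mem O _ _ _ _ _ (haO _) (haO _)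
    · intro v H hH j
      fin_cases j
      · have := xsS_bound N N N N (by omega) (by omega) (by omega) (a 2) (a 0) v H (hH _) (hH _)
        rw [show N + N + 1 = 2 * N + 1 by ring] at this
        exact this
      · have := xsS_bound N N N N (by omega) (by omega) (by omega) (a 0) (a 1) v H (hH _) (hH _)
        rw [show N + N + 1 = 2 * N + 1 by ring] at this
        exact this
      · have := xsS_bound N N N N (by omega) (by omega) (by omega) (a 1) (a 2) v H (hH _) (hH _)
        rw [show N + N + 1 = 2 * N + 1 by ring] at this
        exact this

end PadePart2


section UPart

lemma xs_vlog {K : Type*} [Field K] (v : AbsoluteValue K ℝ) (I b a : Fin 3 → K) (N e : ℕ)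
    (E Hv : ℝ) (hb0 : ∀ j, b j ≠ 0) (ha0 : ∀ j, a j ≠ 0) (hH : 0 < Hv)
    (hI : ∀ j, v (I j) ≤ 256 ^ (N + 1) * v (a j) ^ (2 * N + 1) * Hv ^ e)
    (hE : ∀ j, Real.log (v (b j)) ≤ (2 * N + 1) * Real.log (v (a j)) + E)
    (j k : Fin 3) (hne : I j * b k - I k * b j ≠ 0) :
    Real.log (v (I j * b k - I k * b j)) ≤ Real.log 2 + (N + 1) * Real.log 256 + E
      + e * Real.log Hv + (2 * N + 1) * (Real.log (v (a j)) + Real.log (v (a k))) := by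
  have hva : ∀ j, 0 < v (a j) := fun j => v.pos (ha0 j)
  have hvb : ∀ j, v (b j) ≤ v (a j) ^ (2 * N + 1) * Real.exp E := by
    intro j
    have hp : 0 < v (b j) := v.pos (hb0 j)
    have h2 := hE j
    rw [← Real.log_le_log_iff hp (mul_pos (pow_pos (hva j) _) (Real.exp_pos _)),
      Real.log_mul (pow_pos (hva j) _).ne' (Real.exp_pos _).ne', Real.log_exp, Real.log_pow]
    push_cast
    exact h2
  have hpos := v.pos hne
  have h1 : v (I j * b k - I k * b j) ≤ 2 * (256 ^ (N + 1) * Real.exp E * Hv ^ e *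
      (v (a j) ^ (2 * N + 1) * v (a k) ^ (2 * N + 1))) := by
    have hj := hva j
    have hk := hva k
    calc v (I j * b k - I k * b j) ≤ v (I j * b k) + v (I k * b j) := by
          have := v.add_le (I j * b k) (-(I k * b j))
          rwa [v.map_neg, ← sub_eq_add_neg] at this
      _ = v (I j) * v (b k) + v (I k) * v (b j) := by rw [map_mul, map_mul]
      _ ≤ (256 ^ (N + 1) * v (a j) ^ (2 * N + 1) * Hv ^ e) * (v (a k) ^ (2 * N + 1) * Real.exp E) +
          (256 ^ (N + 1) * v (a k) ^ (2 * N + 1) * Hv ^ e) * (v (a j) ^ (2 * N + 1) * Real.exp E) := by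
          have := v.nonneg (b k)
          have := v.nonneg (b j)
          have := hI j
          have := hI k
          have := hvb j
          have := hvb k
          gcongr
      _ = _ := by ring
  have h2 := Real.log_le_log hpos h1
  have hj := (hva j).ne'
  have hk := (hva k).ne'
  have he := (Real.exp_pos E).ne'
  rw [Real.log_mul (by norm_num) (by positivity), Real.log_mul (by positivity) (by positivity),
    Real.log_mul (by positivity) (by positivity), Real.log_mul (by positivity) (by positivity),
    Real.log_mul (by positivity) (by positivity), Real.log_pow, Real.log_pow, Real.log_pow,
    Real.log_pow, Real.log_exp] at h2
  push_cast at h2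
  linarith

lemma xs_pair {K ι : Type*} [Field K] [CharZero K] [Fintype ι] (O : Subring K)
    (v : ι → AbsoluteValue K ℝ) (hL : ∀ G ∈ O, G ≠ 0 → 1 ≤ ∏ i, v i G) (a b : Fin 3 → K)
    (haO : ∀ j, a j ∈ O) (ha0 : ∀ j, a j ≠ 0) (ha : a 0 + a 1 + a 2 = 0)
    (hbO : ∀ j, b j ∈ O)
    (hb : b 0 + b 1 + b 2 = 0) (hb0 : ∀ j, b j ≠ 0) (N : ℕ) (m : ι → ℝ)
    (hm : ∀ i j, Real.log (v i (a j)) ≤ m i) (hm' : ∀ i, ∃ j, Real.log (v i (a j)) = m i)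
    (hm0 : 0 ≤ ∑ i, m i) (E : ℝ)
    (hE : ∀ i j, Real.log (v i (b j)) ≤ (2 * N + 1) * Real.log (v i (a j)) + E) :
    0 ≤ Fintype.card ι * (Real.log 2 + (N + 1) * Real.log 256 + E) - N * ∑ i, m i +
      (2 * N + 1) * ∑ i, ∑ j, Real.log (v i (a j)) := by
  obtain ⟨e, he, I, hIzero, hIs, hne, hbd⟩ := xs_pade O a b haO ha0 ha hb hb0 N
  set G := I 0 * b 1 - I 1 * b 0 with hG
  have hGO : G ∈ O := O.sub_mem (O.mul_mem (hIzero _) (hbO _)) (O.mul_mem (hIzero _) (hbO _))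
  have hG1 : G = I 1 * b 2 - I 2 * b 1 := by
    rw [hG]; linear_combination b 1 * hIs - I 1 * hb
  have hG2 : G = I 2 * b 0 - I 0 * b 2 := by
    rw [hG]; linear_combination -b 0 * hIs + I 0 * hb
  have h1 := hL G hGO hne
  have h2 : 0 ≤ ∑ i, Real.log (v i G) := by
    rw [← Real.log_prod (fun i _ => ((v i).pos hne).ne')]
    exact Real.log_nonneg h1
  have h3 : ∀ i, Real.log (v i G) ≤ (Real.log 2 + (N + 1) * Real.log 256 + E) +
      ((e : ℝ) - (2 * N + 1)) * m i + (2 * N + 1) * ∑ j, Real.log (v i (a j)) := by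
    intro i
    obtain ⟨k, hk⟩ := hm' i
    have hkm : ∀ j, v i (a j) ≤ v i (a k) := by
      intro j
      rw [← Real.log_le_log_iff ((v i).pos (ha0 j)) ((v i).pos (ha0 k)), hk]
      exact hm i j
    have hx := xs_vlog (v i) I b a N e E (v i (a k)) hb0 ha0 ((v i).pos (ha0 k))
      (hbd (v i) _ hkm) (hE i)
    rw [Fin.sum_univ_three]
    fin_cases k
    · have := hx 1 2 (by rw [← hG1]; exact hne)
      rw [← hG1] at this
      simp only [Fin.zero_eta] at this hk
      rw [hk] at this ⊢
      linarith
    · have := hx 2 0 (by rw [← hG2]; exact hne)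
      rw [← hG2] at this
      simp only [Fin.mk_one] at this hk
      rw [hk] at this ⊢
      linarith
    · have := hx 0 1 (by rw [← hG]; exact hne)
      rw [← hG] at this
      simp only [Fin.reduceFinMk] at this hk
      rw [hk] at this ⊢
      linarith
  have h4 := Finset.sum_le_sum (fun i (_ : i ∈ Finset.univ) => h3 i)
  rw [Finset.sum_add_distrib, Finset.sum_add_distrib, ← Finset.mul_sum, ← Finset.mul_sum] at h4
  simp only [Finset.sum_const, Finset.card_univ, nsmul_eq_mul] at h4
  have h5 : ((e : ℝ) - (2 * N + 1)) * ∑ i, m i ≤ - N * ∑ i, m i := by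
    apply mul_le_mul_of_nonneg_right _ hm0
    rcases he with rfl | rfl
    · linarith [(Nat.cast_nonneg e : (0:ℝ) ≤ e)]
    · push_cast; linarith
  linarith

end UPart


section UPart2
open Filter Topology

def XsGood {K ι : Type*} [Field K] [Fintype ι] (O : Subring K)
    (v : ι → AbsoluteValue K ℝ) (K' lam : ℝ) (a : Fin 3 → K) (H : ℝ) : Prop :=
  (∀ j, a j ∈ O) ∧ (∀ j, a j ≠ 0) ∧ a 0 + a 1 + a 2 = 0 ∧
  (∀ i j, Real.log (v i (a j)) ≤ K' * H) ∧
  ∃ m : ι → ℝ, (∀ i j, Real.log (v i (a j)) ≤ m i) ∧ (∀ i, ∃ j, Real.log (v i (a j)) = m i) ∧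
    lam * H ≤ ∑ i, m i ∧ 5 * ∑ i, ∑ j, Real.log (v i (a j)) ≤ 2 * ∑ i, m i

lemma xs_lower {K ι : Type*} [Field K] [Fintype ι] (O : Subring K)
    (v : ι → AbsoluteValue K ℝ) (hL : ∀ G ∈ O, G ≠ 0 → 1 ≤ ∏ i, v i G) (G : K) (hG : G ∈ O)
    (h0 : G ≠ 0) (T : ℝ) (hT : 0 ≤ T) (h : ∀ i, Real.log (v i G) ≤ T) (i : ι) :
    |Real.log (v i G)| ≤ (Fintype.card ι + 1) * T := by
  classical
  have h2 : 0 ≤ ∑ i, Real.log (v i G) := by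
    rw [← Real.log_prod (fun i _ => ((v i).pos h0).ne')]
    exact Real.log_nonneg (hL G hG h0)
  have h3 : ∑ k, Real.log (v k G) ≤ Fintype.card ι * T + Real.log (v i G) := by
    rw [← Finset.add_sum_erase _ _ (Finset.mem_univ i)]
    have := Finset.sum_le_sum (fun k (_ : k ∈ Finset.univ.erase i) => h k)
    simp only [Finset.sum_const, nsmul_eq_mul] at this
    have h4 : ((Finset.univ.erase i).card : ℝ) ≤ Fintype.card ι := by
      exact_mod_cast Finset.card_le_univ _
    have := mul_le_mul_of_nonneg_right h4 hT
    linarith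
  have hc : (0:ℝ) ≤ Fintype.card ι := Nat.cast_nonneg _
  have := mul_nonneg hc hT
  rw [abs_le]
  constructor
  · nlinarith
  · have := h i
    nlinarith

lemma xs_numeric (c k ε H N h D K2 lam E : ℝ) (hc0 : 0 ≤ c) (hlam : 0 < lam)
    (hε : ε = lam / (100 * (c + 1))) (hH : 2000 * (c + 1) / lam ≤ H) (hN : 200 * K2 * (c + 1) / lam ≤ N)
    (hN4 : 4 ≤ N) (hH1 : 0 < H)
    (hk : k ≤ 20 * N) (hE : E = (2 * N + 3) * H * ε + 2 * H * K2)
    (hh : lam * H ≤ h) (hD : 5 * D ≤ 2 * h)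
    (hp : 0 ≤ c * (k + E) - N * h + (2 * N + 1) * D) : False := by
  have hc1 : 0 < c + 1 := by linarith
  have e1 : 2000 * (c + 1) ≤ H * lam := by rwa [div_le_iff₀ hlam] at hH
  have e2 : 200 * K2 * (c + 1) ≤ N * lam := by rwa [div_le_iff₀ hlam] at hN
  have e3 : ε * (c + 1) * 100 = lam := by rw [hε]; field_simp
  have hε0 : 0 < ε := by rw [hε]; positivity
  have s1 : (2 * N + 1) * D ≤ (2 * N + 1) * (2 / 5 * h) := by
    apply mul_le_mul_of_nonneg_left <;> linarith
  have s2 : c * (k + E) ≤ c * (20 * N) + c * E := by nlinarith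
  have s3 : (N - 2) / 5 * h ≤ c * (20 * N) + c * E := by nlinarith
  have s4 : (N - 2) / 5 * (lam * H) ≤ (N - 2) / 5 * h := by
    apply mul_le_mul_of_nonneg_left <;> linarith
  have s5 : N / 10 * (lam * H) ≤ (N - 2) / 5 * (lam * H) := by
    apply mul_le_mul_of_nonneg_right _ (by positivity); linarith
  have N0 : 0 < N := by linarith
  have s6 : c * (20 * N) ≤ N * (H * lam) / 100 := by nlinarith
  have s7 : c * ((2 * N + 3) * H * ε) ≤ 3 / 100 * (N * (H * lam)) := by
    have : c * ε * 100 ≤ lam := by nlinarith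
    have t1 : (2 * N + 3) * H * (c * ε * 100) ≤ (3 * N) * H * lam := by
      gcongr
      linarith
    linarith
  have s8 : c * (2 * H * K2) ≤ 1 / 100 * (N * (H * lam)) := by
    by_cases hK : 0 ≤ K2
    · have : 200 * K2 * c ≤ N * lam := by nlinarith
      have := mul_le_mul_of_nonneg_right this hH1.le
      linarith
    · have t1 : c * (2 * H * K2) ≤ 0 := by
        have : 2 * H * K2 ≤ 0 := by nlinarith
        nlinarith
      have : 0 ≤ N * (H * lam) := by positivity
      linarith
  have s9 : 0 < N * (H * lam) := by positivity
  have s10 : c * E = c * ((2 * N + 3) * H * ε) + c * (2 * H * K2) := by rw [hE]; ring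
  linarith

theorem xs_U {K ι : Type*} [Field K] [CharZero K] [Fintype ι] (O : Subring K)
    (v : ι → AbsoluteValue K ℝ) (hL : ∀ G ∈ O, G ≠ 0 → 1 ≤ ∏ i, v i G) (K' lam : ℝ)
    (hK' : 0 ≤ K') (hlam : 0 < lam) :
    ∃ B : ℝ, ∀ a H, XsGood O v K' lam a H → H ≤ B := by
  by_contra hcon
  push Not at hcon
  choose a H hg hH using fun n : ℕ => hcon (n : ℝ)
  have hHpos : ∀ n, 0 < H n := fun n => lt_of_le_of_lt (Nat.cast_nonneg n) (hH n)
  choose haO ha0 has hup m hm hm' hlm hD using hg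
  set c : ℝ := (Fintype.card ι : ℝ) with hc
  have hc0 : 0 ≤ c := Nat.cast_nonneg _
  set K2 : ℝ := (c + 1) * K' with hK2
  set w : ℕ → (ι × Fin 3 → ℝ) := fun n x => Real.log (v x.1 (a n x.2)) / H n with hw
  have hwb : ∀ n x, |w n x| ≤ K2 := by
    intro n x
    have := xs_lower O v hL (a n x.2) (haO n _) (ha0 n _) (K' * H n)
      (mul_nonneg hK' (hHpos n).le) (fun i => hup n i _) x.1
    rw [hw]
    simp only [abs_div, abs_of_pos (hHpos n)]
    rw [div_le_iff₀ (hHpos n)]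
    linarith
  have hK20 : 0 ≤ K2 := by positivity
  have hb : Bornology.IsBounded (Metric.closedBall (0 : ι × Fin 3 → ℝ) K2) :=
    Metric.isBounded_closedBall
  obtain ⟨w0, -, φ, hφ, hlim⟩ := tendsto_subseq_of_bounded hb (x := w) (by
    intro n
    rw [mem_closedBall_zero_iff, pi_norm_le_iff_of_nonneg hK20]
    exact hwb n)
  have hcau := hlim.cauchySeq
  set ε : ℝ := lam / (100 * (c + 1)) with hε
  have hε0 : 0 < ε := by positivity
  obtain ⟨n0, hn0⟩ := Metric.cauchySeq_iff.mp hcau ε hε0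
  obtain ⟨k1, hk1⟩ := exists_nat_ge (2000 * (c + 1) / lam)
  obtain ⟨N0, hN0⟩ := exists_nat_ge (200 * K2 * (c + 1) / lam)
  set p := max n0 k1 with hp
  set n := φ p with hn
  have hHn : 2000 * (c + 1) / lam ≤ H n := by
    have h1 : (k1 : ℝ) ≤ n := by
      exact_mod_cast (le_max_right n0 k1).trans (hφ.id_le p)
    linarith [hH n]
  obtain ⟨k2, hk2⟩ := exists_nat_ge ((2 * (N0 + 4 : ℕ) + 1) * H n)
  set p' := max n0 k2 with hp'
  set n' := φ p' with hn'
  have hHn' : (2 * (N0 + 4 : ℕ) + 1) * H n ≤ H n' := by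
    have h1 : (k2 : ℝ) ≤ n' := by
      exact_mod_cast (le_max_right n0 k2).trans (hφ.id_le p')
    linarith [hH n']
  set R : ℝ := (H n' / H n - 1) / 2 with hR
  have hRN : ((N0 + 4 : ℕ) : ℝ) ≤ R := by
    have : (2 * (N0 + 4 : ℕ) + 1 : ℝ) ≤ H n' / H n := by rwa [le_div_iff₀ (hHpos n)]
    rw [hR]; linarith
  have hR0 : 0 ≤ R := le_trans (Nat.cast_nonneg _) hRN
  set N := ⌊R⌋₊ with hN
  have hN1 : N0 + 4 ≤ N := Nat.le_floor hRN
  have hN2 : (N : ℝ) ≤ R := Nat.floor_le hR0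
  have hN3 : R < N + 1 := Nat.lt_floor_add_one R
  have hHH : H n' = (2 * R + 1) * H n := by
    rw [hR]; have := (hHpos n).ne'; field_simp; ring
  have hEE : ∀ i j, Real.log (v i (a n' j)) ≤ (2 * N + 1) * Real.log (v i (a n j)) +
      ((2 * N + 3) * H n * ε + 2 * H n * K2) := by
    intro i j
    have h1 := hn0 p' (le_max_left _ _) p (le_max_left _ _)
    have h2 := (dist_le_pi_dist _ _ (i, j)).trans_lt h1
    rw [Real.dist_eq] at h2
    have e1 : Real.log (v i (a n' j)) = H n' * w n' (i, j) := by
      simp only [hw]; have := (hHpos n').ne'; field_simp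
    have e2 : Real.log (v i (a n j)) = H n * w n (i, j) := by
      simp only [hw]; have := (hHpos n).ne'; field_simp
    have h3 : w n' (i, j) - w n (i, j) ≤ ε := ((abs_lt.mp h2).2).le
    have h4 := (abs_le.mp (hwb n (i, j))).2
    rw [e1, e2, hHH]
    have hn1 := hHpos n
    have t1 : (2 * R + 1) * H n * (w n' (i, j) - w n (i, j)) ≤ (2 * N + 3) * H n * ε := by
      calc _ ≤ (2 * R + 1) * H n * ε := by gcongr
        _ ≤ _ := by gcongr ?_ * _ * _; linarith
    have t2 : (2 * (R - N)) * H n * w n (i, j) ≤ 2 * H n * K2 := by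
      have hRN0 : 0 ≤ R - N := by linarith
      calc _ ≤ (2 * (R - N)) * H n * K2 := by gcongr
        _ ≤ 2 * 1 * H n * K2 := by gcongr; linarith
        _ = _ := by ring
    linarith
  have hhn := hlm n
  have hpos : 0 ≤ ∑ i, m n i := le_trans (mul_nonneg hlam.le (hHpos n).le) hhn
  have hfin := xs_pair O v hL (a n) (a n') (haO n) (ha0 n) (has n) (haO n') (has n') (ha0 n') N
    (m n) (hm n) (hm' n) hpos _ hEE
  have hN4 : (N0 : ℝ) + 4 ≤ N := by exact_mod_cast hN1
  have hN00 : (0 : ℝ) ≤ N0 := Nat.cast_nonneg _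
  refine xs_numeric c (Real.log 2 + (N + 1) * Real.log 256) ε (H n) N _ _ K2 lam _ hc0 hlam hε hHn
    (by linarith) (by linarith) (hHpos n) ?_ rfl hhn (hD n) hfin
  have l1 : Real.log 2 ≤ 1 := by linarith [Real.log_two_lt_d9]
  have l2 : Real.log 256 ≤ 8 := by
    have : (256 : ℝ) = 2 ^ 8 := by norm_num
    rw [this, Real.log_pow]; push_cast; linarith
  have : ((N:ℝ) + 1) * Real.log 256 ≤ (N + 1) * 8 := by gcongr
  linarith

end UPart2


section PlacesPart

noncomputable def xsAbs {M L : Type} [Field M] [Algebra ℚ M] [NormedField L] [Algebra ℚ L]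
    (σ : M →ₐ[ℚ] L) : AbsoluteValue M ℝ where
  toFun x := ‖σ x‖
  map_mul' x y := by simp
  nonneg' x := norm_nonneg _
  eq_zero' x := by simp
  add_le' x y := by rw [map_add]; exact norm_add_le _ _

abbrev XsPl (M : Type) [Field M] [Algebra ℚ M] : Type :=
  (M →ₐ[ℚ] ℂ) ⊕ (M →ₐ[ℚ] PadicAlgCl 3)

noncomputable def xsV (M : Type) [Field M] [Algebra ℚ M] : XsPl M → AbsoluteValue M ℝ
  | Sum.inl σ => xsAbs σ
  | Sum.inr τ => xsAbs τ

variable {M : Type} [Field M] [Algebra ℚ M]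

lemma xsV_inl (σ : M →ₐ[ℚ] ℂ) (x : M) : xsV M (Sum.inl σ) x = ‖σ x‖ := rfl
lemma xsV_inr (σ : M →ₐ[ℚ] PadicAlgCl 3) (x : M) : xsV M (Sum.inr σ) x = ‖σ x‖ := rfl

lemma xs_norm_rat (q : ℚ) : ‖(q : PadicAlgCl 3)‖ = (padicNorm 3 q : ℝ) := by
  have h : (q : PadicAlgCl 3) = ((q : ℚ_[3]) : PadicAlgCl 3) := by
    simp
  rw [h, PadicAlgCl.norm_extends, Padic.eq_padicNorm]

lemma xsV_inl_rat (σ : M →ₐ[ℚ] ℂ) (q : ℚ) : xsV M (Sum.inl σ) (algebraMap ℚ M q) = |(q : ℝ)| := by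
  rw [xsV_inl, AlgHom.commutes]
  simp

lemma xsV_inr_rat (σ : M →ₐ[ℚ] PadicAlgCl 3) (q : ℚ) :
    xsV M (Sum.inr σ) (algebraMap ℚ M q) = (padicNorm 3 q : ℝ) := by
  rw [xsV_inr, AlgHom.commutes, ← xs_norm_rat]
  simp

lemma xsV_inr_add (σ : M →ₐ[ℚ] PadicAlgCl 3) (x y : M) :
    xsV M (Sum.inr σ) (x + y) ≤ max (xsV M (Sum.inr σ) x) (xsV M (Sum.inr σ) y) := by
  rw [xsV_inr, map_add]
  exact PadicAlgCl.isNonarchimedean 3 _ _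

lemma xsV_inr_int (σ : M →ₐ[ℚ] PadicAlgCl 3) (n : ℤ) : xsV M (Sum.inr σ) (n : M) ≤ 1 := by
  have := xsV_inr_rat σ (n : ℚ)
  rw [map_intCast] at this
  rw [this]
  exact_mod_cast padicNorm.of_int n

/-- integral elements have 3-adic absolute value at most one -/
lemma xsV_inr_integral (σ : M →ₐ[ℚ] PadicAlgCl 3) (x : M) (hx : IsIntegral ℤ x) :
    xsV M (Sum.inr σ) x ≤ 1 := by
  by_contra hcon
  push Not at hcon
  obtain ⟨p, hp, hpx⟩ := hx
  set w := xsV M (Sum.inr σ) with hw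
  have hna : IsNonarchimedean w := fun a b => xsV_inr_add σ a b
  have h1 : x ^ p.natDegree = - ∑ i ∈ Finset.range p.natDegree, (p.coeff i : M) * x ^ i := by
    rw [Polynomial.eval₂_eq_sum_range, Finset.sum_range_succ] at hpx
    rw [Polynomial.coeff_natDegree, hp.leadingCoeff] at hpx
    simp at hpx
    linear_combination hpx
  have hd : p.natDegree ≠ 0 := by
    intro h
    rw [h] at h1
    simp at h1
  have h2 : w (∑ i ∈ Finset.range p.natDegree, (p.coeff i : M) * x ^ i) ≤ w x ^ (p.natDegree - 1) := by
    obtain ⟨i, hi, hi2⟩ := IsNonarchimedean.finset_image_add_of_nonempty hna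
      (fun i => (p.coeff i : M) * x ^ i) (t := Finset.range p.natDegree) (by simpa using hd)
    refine hi2.trans ?_
    rw [map_mul, map_pow]
    have hi' : i ≤ p.natDegree - 1 := by simp at hi; omega
    calc _ ≤ 1 * w x ^ i := by
          have := w.nonneg x
          gcongr
          exact xsV_inr_int σ _
      _ ≤ _ := by rw [one_mul]; exact pow_le_pow_right₀ hcon.le hi'
  have h3 : w x ^ p.natDegree ≤ w x ^ (p.natDegree - 1) := by
    rw [← map_pow, h1, w.map_neg]; exact h2
  have h4 : w x ^ (p.natDegree - 1) < w x ^ p.natDegree := pow_lt_pow_right₀ hcon (by omega)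
  linarith

lemma xs_int_prod (n : ℤ) (hn : n ≠ 0) : (1 : ℝ) ≤ |(n : ℝ)| * (padicNorm 3 (n : ℚ) : ℝ) := by
  have h := padicNorm.int_eq_one_iff (p := 3)
  have h0 : (n : ℚ) ≠ 0 := by exact_mod_cast hn
  rw [padicNorm.eq_zpow_of_nonzero h0, padicValRat.of_int]
  have hd : ((3 ^ padicValInt 3 n : ℕ) : ℤ) ∣ n := by
    have := padicValInt_dvd (p := 3) n
    exact_mod_cast this
  have h2 : ((3 ^ padicValInt 3 n : ℕ) : ℤ) ≤ |n| :=
    Int.le_of_dvd (abs_pos.mpr hn) ((dvd_abs _ _).mpr hd)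
  have h3 : (3 : ℝ) ^ padicValInt 3 n ≤ |(n : ℝ)| := by exact_mod_cast h2
  push_cast
  rw [zpow_neg, zpow_natCast, ← div_eq_mul_inv, one_le_div (by positivity)]
  exact h3

variable (M) in
/-- ring of 3-integers -/
def xsO : Subring M where
  carrier := {x | ∃ k : ℕ, IsIntegral ℤ ((3 : M) ^ k * x)}
  mul_mem' := by
    rintro x y ⟨k, hk⟩ ⟨l, hl⟩
    refine ⟨k + l, ?_⟩
    have e : (3 : M) ^ (k + l) * (x * y) = (3 ^ k * x) * (3 ^ l * y) := by ring
    show IsIntegral ℤ ((3 : M) ^ (k + l) * (x * y))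
    rw [e]
    exact hk.mul hl
  one_mem' := ⟨0, by simpa using isIntegral_one⟩
  add_mem' := by
    rintro x y ⟨k, hk⟩ ⟨l, hl⟩
    refine ⟨k + l, ?_⟩
    have h3 : ∀ n, IsIntegral ℤ ((3 : M) ^ n) := fun n => by
      have := isIntegral_algebraMap (R := ℤ) (A := M) (x := 3)
      simp at this
      exact this.pow n
    have e : (3 : M) ^ (k + l) * (x + y) = 3 ^ l * (3 ^ k * x) + 3 ^ k * (3 ^ l * y) := by ring
    show IsIntegral ℤ ((3 : M) ^ (k + l) * (x + y))
    rw [e]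
    exact ((h3 l).mul hk).add ((h3 k).mul hl)
  zero_mem' := ⟨0, by simpa using isIntegral_zero⟩
  neg_mem' := by
    rintro x ⟨k, hk⟩
    refine ⟨k, ?_⟩
    have e : (3 : M) ^ k * (- x) = - (3 ^ k * x) := by ring
    show IsIntegral ℤ ((3 : M) ^ k * (- x))
    rw [e]
    exact hk.neg

lemma xsO_of_integral (x : M) (h : IsIntegral ℤ x) : x ∈ xsO M := ⟨0, by simpa using h⟩

variable [FiniteDimensional ℚ M]

lemma xsV_prod (x : M) : ∏ i, xsV M i x =
    |((Algebra.norm ℚ x : ℚ) : ℝ)| * (padicNorm 3 (Algebra.norm ℚ x) : ℝ) := by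
  have : CharZero M := algebraRat.charZero M
  rw [Fintype.prod_sum_type]
  congr 1
  · have := congrArg norm (Algebra.norm_eq_prod_embeddings ℚ ℂ x)
    rw [norm_prod] at this
    simp only [xsV_inl, ← this]
    simp
  · have := congrArg norm (Algebra.norm_eq_prod_embeddings ℚ (PadicAlgCl 3) x)
    rw [norm_prod] at this
    simp only [xsV_inr, ← this]
    rw [← xs_norm_rat]
    simp

lemma xsV_prod_three : ∏ i, xsV M i 3 = 1 := by
  have h := xsV_prod (3 : M)
  have e : (3 : M) = algebraMap ℚ M 3 := by simp
  rw [h, e, Algebra.norm_algebraMap]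
  have h3 : padicNorm 3 (3 : ℚ) = 3⁻¹ := by
    have := padicNorm.padicNorm_p (p := 3) (by norm_num)
    simpa using this
  have h4 : ∀ d : ℕ, padicNorm 3 ((3 : ℚ) ^ d) = (3⁻¹) ^ d := by
    intro d
    induction d with
    | zero => simp
    | succ d ih => rw [pow_succ, padicNorm.mul, ih, h3, pow_succ]
  rw [h4]
  push_cast
  rw [abs_of_pos (by positivity), ← mul_pow]
  norm_num

theorem xs_liouville : ∀ G ∈ xsO M, G ≠ 0 → 1 ≤ ∏ i, xsV M i G := by
  rintro G ⟨k, hk⟩ hG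
  have : CharZero M := algebraRat.charZero M
  have h1 : ∏ i, xsV M i ((3 : M) ^ k * G) = ∏ i, xsV M i G := by
    simp only [map_mul, map_pow, Finset.prod_mul_distrib, Finset.prod_pow, xsV_prod_three,
      one_pow, one_mul]
  rw [← h1, xsV_prod]
  have h2 := Algebra.isIntegral_norm ℚ hk
  obtain ⟨n, hn⟩ := IsIntegrallyClosed.isIntegral_iff.mp h2
  have hne : Algebra.norm ℚ ((3 : M) ^ k * G) ≠ 0 := by
    rw [Algebra.norm_ne_zero_iff]
    exact mul_ne_zero (pow_ne_zero _ (by norm_num)) hG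
  rw [← hn]
  have hn0 : n ≠ 0 := by
    rintro rfl
    exact hne (by rw [← hn]; simp)
  have := xs_int_prod n hn0
  simpa using this

variable (M) in
lemma xs_card : Fintype.card (M →ₐ[ℚ] ℂ) = Module.finrank ℚ M ∧
    Fintype.card (M →ₐ[ℚ] PadicAlgCl 3) = Module.finrank ℚ M := by
  have : CharZero M := algebraRat.charZero M
  exact ⟨AlgHom.card ℚ M ℂ, AlgHom.card ℚ M (PadicAlgCl 3)⟩

end PlacesPart


section ClosurePart
open IntermediateField
open scoped IntermediateField.algebraAdjoinAdjoin

lemma xs_linind {k F : Type} [Field k] [Field F] [Algebra k F] (s : Set F)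
    (hs : AlgebraicIndependent k ((↑) : s → F)) {κ : Type} (b : κ → algebraicClosure k F)
    (hb : LinearIndependent k b) :
    LinearIndependent (Algebra.adjoin k s) (fun i => (b i : F)) := by
  rw [linearIndependent_iff']
  intro t g hg i hi
  have hs' : AlgebraicIndependent (algebraicClosure k F) ((↑) : s → F) := hs.algebraicClosure
  have hex : ∀ i, ∃ P : MvPolynomial s k, MvPolynomial.aeval ((↑) : s → F) P = (g i : F) := by
    intro i
    have := (g i).2
    have e := Algebra.adjoin_eq_range k s
    exact (SetLike.ext_iff.mp e _).mp this
  choose P hP using hex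
  have h1 : MvPolynomial.aeval ((↑) : s → F)
      (∑ i ∈ t, MvPolynomial.C (b i) * (P i).map (algebraMap k (algebraicClosure k F))) = 0 := by
    rw [map_sum, ← hg]
    apply Finset.sum_congr rfl
    intro i _
    rw [map_mul, MvPolynomial.aeval_C, MvPolynomial.aeval_map_algebraMap, hP, mul_comm]
    rfl
  have h2 := (algebraicIndependent_iff.mp hs') _ h1
  have h3 : P i = 0 := by
    ext m
    have h4 := congrArg (MvPolynomial.coeff m) h2
    rw [MvPolynomial.coeff_sum] at h4
    simp only [MvPolynomial.coeff_C_mul, MvPolynomial.coeff_map, MvPolynomial.coeff_zero] at h4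
    have h5 := linearIndependent_iff'.mp hb t (fun i => MvPolynomial.coeff m (P i)) (by
      rw [← h4]
      apply Finset.sum_congr rfl
      intro i _
      exact (Algebra.smul_def _ _).trans (mul_comm _ _))
    simpa using h5 i hi
  have h6 := hP i
  rw [h3, map_zero] at h6
  exact Subtype.ext h6.symm

lemma xs_finite_closure {k F : Type} [Field k] [Field F] [Algebra k F]
    (hfg : ∃ S : Finset F, IntermediateField.adjoin k (S : Set F) = ⊤) :
    FiniteDimensional k (algebraicClosure k F) := by
  have hess : Algebra.EssFiniteType k F := fg_top_iff.mp hfg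
  obtain ⟨s, hs⟩ := exists_isTranscendenceBasis k F
  have hfin : Module.Finite (adjoin k s) F := by
    apply +allowSynthFailures Algebra.finite_of_essFiniteType_of_isAlgebraic
    · exact .of_comp k _ _
    · convert! hs.isAlgebraic_field <;> simp
  let b := Module.Basis.ofVectorSpace k (algebraicClosure k F)
  have h1 := xs_linind s hs.1 b b.linearIndependent
  rw [LinearIndependent.iff_fractionRing (Algebra.adjoin k s) (adjoin k s)] at h1
  have := h1.finite
  exact Module.Finite.of_basis b

lemma xs_exists_M {k F L : Type} [Field k] [CharZero k] [Field F] [Algebra k F]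
    [Field L] [Algebra k L] [Algebra F L] [IsScalarTower k F L] [IsAlgClosed L]
    (hfg : ∃ S : Finset F, IntermediateField.adjoin k (S : Set F) = ⊤) :
    ∃ M : IntermediateField k L, FiniteDimensional k M ∧ Normal k M ∧
      (∀ t : F, IsAlgebraic k t → algebraMap F L t ∈ M) ∧
      (∃ ω ∈ M, ω ^ 2 + ω + 1 = 0) ∧ (∃ θ ∈ M, θ ^ 3 = 9) := by
  have hfin := xs_finite_closure hfg
  obtain ⟨ω, hω⟩ : ∃ ω : L, ω ^ 2 + ω + 1 = 0 := by
    obtain ⟨x, hx⟩ := IsAlgClosed.exists_root (Polynomial.X ^ 2 + Polynomial.X + 1 : Polynomial L)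
      (by
        have : (Polynomial.X ^ 2 + Polynomial.X + 1 : Polynomial L).degree = 2 := by compute_degree!
        rw [this]; norm_num)
    exact ⟨x, by simpa using hx⟩
  obtain ⟨θ, hθ⟩ : ∃ θ : L, θ ^ 3 = 9 := IsAlgClosed.exists_pow_nat_eq 9 (by norm_num)
  have iω : IsIntegral k ω := ⟨Polynomial.X ^ 2 + Polynomial.X + 1, by monicity!, by simpa using hω⟩
  have iθ : IsIntegral k θ := ⟨Polynomial.X ^ 3 - 9, by monicity!, by
    simp [hθ]⟩
  set φ : algebraicClosure k F →ₐ[k] L :=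
    (IsScalarTower.toAlgHom k F L).comp (algebraicClosure k F).val
  set E : IntermediateField k L := φ.fieldRange ⊔ k⟮ω⟯ ⊔ k⟮θ⟯
  have f1 : FiniteDimensional k φ.fieldRange :=
    LinearMap.finiteDimensional_range φ.toLinearMap
  have f2 : FiniteDimensional k k⟮ω⟯ := adjoin.finiteDimensional iω
  have f3 : FiniteDimensional k k⟮θ⟯ := adjoin.finiteDimensional iθ
  have fE : FiniteDimensional k E := inferInstance
  have hle : E ≤ normalClosure k E L := by
    exact IntermediateField.le_normalClosure E
  refine ⟨normalClosure k E L, inferInstance, ?_, ?_, ?_, ?_⟩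
  · have : Algebra.IsAlgebraic k E := Algebra.IsAlgebraic.of_finite k E
    exact (Algebra.IsAlgebraic.isNormalClosure_normalClosure
      (fun x => IsAlgClosed.splits _)).normal
  · intro t ht
    apply hle
    apply (le_sup_left : φ.fieldRange ⊔ k⟮ω⟯ ≤ E)
    apply (le_sup_left : φ.fieldRange ≤ φ.fieldRange ⊔ k⟮ω⟯)
    exact ⟨⟨t, mem_algebraicClosure_iff.mpr ht⟩, rfl⟩
  · refine ⟨ω, ?_, hω⟩
    apply hle
    apply (le_sup_left : φ.fieldRange ⊔ k⟮ω⟯ ≤ E)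
    apply (le_sup_right : k⟮ω⟯ ≤ φ.fieldRange ⊔ k⟮ω⟯)
    exact mem_adjoin_simple_self k ω
  · refine ⟨θ, ?_, hθ⟩
    apply hle
    apply (le_sup_right : k⟮θ⟯ ≤ E)
    exact mem_adjoin_simple_self k θ

end ClosurePart


section CaseOne

variable {M : Type} [Field M] [Algebra ℚ M]

lemma xs_log_inl (σ : M →ₐ[ℚ] ℂ) (n : ℤ) :
    Real.log (xsV M (Sum.inl σ) ((3 : M) ^ n)) = n * Real.log 3 := by
  have h : xsV M (Sum.inl σ) (3 : M) = 3 := by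
    have := xsV_inl_rat σ 3
    simpa using this
  rw [map_zpow₀, h, Real.log_zpow]

lemma xs_log_inr (σ : M →ₐ[ℚ] PadicAlgCl 3) (n : ℤ) :
    Real.log (xsV M (Sum.inr σ) ((3 : M) ^ n)) = - n * Real.log 3 := by
  have h3 : padicNorm 3 (3 : ℚ) = 3⁻¹ := by
    have := padicNorm.padicNorm_p (p := 3) (by norm_num)
    simpa using this
  have h : xsV M (Sum.inr σ) (3 : M) = 3⁻¹ := by
    have := xsV_inr_rat σ 3
    rw [h3] at this
    simpa using this
  rw [map_zpow₀, h, Real.log_zpow, Real.log_inv]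
  ring

lemma xs_log_abs (i : XsPl M) (n : ℤ) :
    Real.log (xsV M i ((3 : M) ^ n)) ≤ |(n : ℝ)| * Real.log 3 := by
  have h3 : 0 < Real.log 3 := Real.log_pos (by norm_num)
  rcases i with σ | σ
  · rw [xs_log_inl]
    exact mul_le_mul_of_nonneg_right (le_abs_self _) h3.le
  · rw [xs_log_inr]
    exact mul_le_mul_of_nonneg_right (neg_le_abs _) h3.le

lemma xsO_three (n : ℤ) : (3 : M) ^ n ∈ xsO M := by
  have : CharZero M := algebraRat.charZero M
  have h3 : ∀ k : ℕ, IsIntegral ℤ ((3 : M) ^ k) := fun k => by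
    have := isIntegral_algebraMap (R := ℤ) (A := M) (x := 3)
    simp at this
    exact this.pow k
  obtain ⟨k, rfl | rfl⟩ := n.eq_nat_or_neg
  · rw [zpow_natCast]
    exact xsO_of_integral _ (h3 k)
  · refine ⟨k, ?_⟩
    have : (3 : M) ^ k * 3 ^ (-(k : ℤ)) = 1 := by
      rw [zpow_neg, zpow_natCast]
      exact mul_inv_cancel₀ (pow_ne_zero _ (by norm_num))
    rw [this]
    exact isIntegral_one

lemma xsO_quad (s B e : M) (hs : s ∈ xsO M) (hB : B ∈ xsO M) (he : e ^ 2 - s * e + B = 0) :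
    e ∈ xsO M := by
  obtain ⟨k, hk⟩ := hs
  obtain ⟨l, hl⟩ := hB
  have h3 : ∀ k : ℕ, IsIntegral ℤ ((3 : M) ^ k) := fun k => by
    have := isIntegral_algebraMap (R := ℤ) (A := M) (x := 3)
    simp at this
    exact this.pow k
  refine ⟨k + l, ?_⟩
  set S : integralClosure ℤ M := ⟨3 ^ l * (3 ^ k * s), (h3 l).mul hk⟩ with hS
  set T : integralClosure ℤ M := ⟨3 ^ (2 * k + l) * (3 ^ l * B), (h3 _).mul hl⟩ with hT
  have : IsIntegral (integralClosure ℤ M) ((3 : M) ^ (k + l) * e) := by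
    refine ⟨Polynomial.X ^ 2 - Polynomial.C S * Polynomial.X + Polynomial.C T, ?_, ?_⟩
    · monicity!
    · simp only [Polynomial.eval₂_add, Polynomial.eval₂_sub, Polynomial.eval₂_mul,
        Polynomial.eval₂_pow, Polynomial.eval₂_X, Polynomial.eval₂_C]
      change ((3 : M) ^ (k + l) * e) ^ 2 - (3 ^ l * (3 ^ k * s)) * ((3 : M) ^ (k + l) * e) +
        3 ^ (2 * k + l) * (3 ^ l * B) = 0
      linear_combination (3 : M) ^ (2 * (k + l)) * he
  exact isIntegral_trans _ this

variable [FiniteDimensional ℚ M]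

lemma xs_unit_log (u w : M) (hu : u ∈ xsO M) (hw : w ∈ xsO M) (n : ℤ) (h : u * w = 3 ^ n) :
    ∑ i, Real.log (xsV M i u) = 0 := by
  have : CharZero M := algebraRat.charZero M
  have hn : (3 : M) ^ n ≠ 0 := zpow_ne_zero _ (by norm_num)
  have hu0 : u ≠ 0 := by rintro rfl; simp at h; exact hn h.symm
  have hw0 : w ≠ 0 := by rintro rfl; simp at h; exact hn h.symm
  have h1 := xs_liouville u hu hu0
  have h2 := xs_liouville w hw hw0
  have h3 : (∏ i, xsV M i u) * ∏ i, xsV M i w = 1 := by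
    rw [← Finset.prod_mul_distrib]
    simp only [← map_mul, h, map_zpow₀]
    rw [Finset.prod_zpow, xsV_prod_three, one_zpow]
  have h4 : ∏ i, xsV M i u = 1 := by nlinarith
  rw [← Real.log_prod (fun i _ => by simpa using hu0), h4, Real.log_one]

lemma xs_case_one_up (i : XsPl M) (m n : ℤ) (e : M)
    (he : e ^ 2 - (3 ^ m - 3 ^ n - 1) * e + 3 ^ n = 0) :
    xsV M i e ≤ 4 * Real.exp ((|(m : ℝ)| + |(n : ℝ)|) * Real.log 3) := by
  have : CharZero M := algebraRat.charZero M
  set v := xsV M i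
  have hv : ∀ k : ℤ, v (3 ^ k) ≤ Real.exp (|(k : ℝ)| * Real.log 3) := fun k => by
    have h := xs_log_abs i k
    rwa [Real.log_le_iff_le_exp] at h
    exact v.pos (zpow_ne_zero _ (by norm_num))
  have h3 : 0 < Real.log 3 := Real.log_pos (by norm_num)
  set E := Real.exp ((|(m : ℝ)| + |(n : ℝ)|) * Real.log 3) with hE
  have hE1 : 1 ≤ E := Real.one_le_exp (by positivity)
  have hm : v (3 ^ m) ≤ E := (hv m).trans (Real.exp_le_exp.mpr (by
    have := abs_nonneg (n : ℝ); nlinarith))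
  have hn : v (3 ^ n) ≤ E := (hv n).trans (Real.exp_le_exp.mpr (by
    have := abs_nonneg (m : ℝ); nlinarith))
  have hs : v (3 ^ m - 3 ^ n - 1) ≤ 3 * E := by
    have a1 := v.add_le (3 ^ m - 3 ^ n) (-1)
    have a2 := v.add_le (3 ^ m) (-(3 ^ n))
    rw [v.map_neg] at a1 a2
    rw [← sub_eq_add_neg] at a1 a2
    rw [v.map_one] at a1
    linarith
  have h2 : v e ^ 2 ≤ 3 * E * v e + E := by
    have e1 : e ^ 2 = (3 ^ m - 3 ^ n - 1) * e + -(3 ^ n) := by linear_combination he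
    rw [← map_pow, e1]
    refine (v.add_le _ _).trans ?_
    rw [v.map_neg, v.map_mul]
    have := v.nonneg e
    gcongr
  by_contra hc
  push Not at hc
  nlinarith

theorem xs_case_one : ∃ B : ℝ, ∀ m n : ℤ, ∀ r : M,
    r ^ 2 = (3 ^ m - 3 ^ n - 1) ^ 2 - 4 * 3 ^ n → |(m : ℝ)| + |(n : ℝ)| ≤ B := by
  have : CharZero M := algebraRat.charZero M
  have h3 : 0 < Real.log 3 := Real.log_pos (by norm_num)
  have h5 : 0 < Real.log 5 := Real.log_pos (by norm_num)
  obtain ⟨B, hB⟩ := xs_U (xsO M) (xsV M) xs_liouville (Real.log 5 + Real.log 3) (Real.log 3 / 4)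
    (by positivity) (by positivity)
  refine ⟨max 1 B, fun m n r hr => ?_⟩
  by_contra hcon
  push Not at hcon
  obtain ⟨hH1, hHB⟩ := max_lt_iff.mp hcon
  set H : ℝ := |(m : ℝ)| + |(n : ℝ)| with hH
  set s : M := 3 ^ m - 3 ^ n - 1 with hs
  have hsO : s ∈ xsO M := (xsO M).sub_mem ((xsO M).sub_mem (xsO_three m) (xsO_three n)) (xsO M).one_mem
  have key : ∀ e f : M, e * f = 3 ^ n → e + f = s → (∀ μ : XsPl M → ℝ,
      (∀ i, μ i = max (max (Real.log (xsV M i e)) 0) (Real.log (xsV M i (1 + e)))) →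
      ∑ i, μ i < Real.log 3 / 4 * H) := by
    intro e f hef hsum μ hμ
    have heq : e ^ 2 - s * e + 3 ^ n = 0 := by rw [← hef, ← hsum]; ring
    have hfq : f ^ 2 - s * f + 3 ^ n = 0 := by rw [← hef, ← hsum]; ring
    have heO := xsO_quad s _ e hsO (xsO_three n) heq
    have hfO := xsO_quad s _ f hsO (xsO_three n) hfq
    have h1eO : 1 + e ∈ xsO M := (xsO M).add_mem (xsO M).one_mem heO
    have h1fO : 1 + f ∈ xsO M := (xsO M).add_mem (xsO M).one_mem hfO
    have hprod : (1 + e) * (1 + f) = 3 ^ m := by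
      have : (1 + e) * (1 + f) = 1 + (e + f) + e * f := by ring
      rw [this, hsum, hef, hs]; ring
    have hn0 : ∀ k : ℤ, (3 : M) ^ k ≠ 0 := fun k => zpow_ne_zero _ (by norm_num)
    have he0 : e ≠ 0 := by rintro rfl; simp at hef; exact hn0 n hef.symm
    have h1e0 : 1 + e ≠ 0 := by intro h; rw [h] at hprod; simp at hprod; exact hn0 m hprod.symm
    by_contra hlt
    push Not at hlt
    have hlog1 := xs_unit_log e f heO hfO n hef
    have hlog2 := xs_unit_log (1 + e) (1 + f) h1eO h1fO m hprod
    refine absurd (hB ![e, 1, -(1 + e)] H ⟨?_, ?_, ?_, ?_, μ, ?_, ?_, hlt, ?_⟩) (not_le.mpr hHB)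
    · intro j; fin_cases j
      · exact heO
      · exact (xsO M).one_mem
      · exact (xsO M).neg_mem h1eO
    · intro j; fin_cases j
      · exact he0
      · exact one_ne_zero
      · exact neg_ne_zero.mpr h1e0
    · simp; ring
    · intro i j
      have hb := xs_case_one_up i m n e heq
      have hE1 : 1 ≤ Real.exp (H * Real.log 3) := Real.one_le_exp (by positivity)
      have hb' : ∀ x : M, x ≠ 0 → xsV M i x ≤ 5 * Real.exp (H * Real.log 3) →
          Real.log (xsV M i x) ≤ (Real.log 5 + Real.log 3) * H := by
        intro x hx h
        have := Real.log_le_log ((xsV M i).pos hx) h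
        rw [Real.log_mul (by norm_num) (Real.exp_ne_zero _), Real.log_exp] at this
        nlinarith
      fin_cases j
      · exact hb' e he0 (by linarith)
      · refine hb' 1 one_ne_zero ?_
        rw [(xsV M i).map_one]; linarith
      · refine hb' (-(1 + e)) (neg_ne_zero.mpr h1e0) ?_
        rw [(xsV M i).map_neg]
        have := (xsV M i).add_le 1 e
        rw [(xsV M i).map_one] at this
        linarith
    · intro i j
      rw [hμ]
      fin_cases j
      · simp
      · simp
      · simp only [Fin.reduceFinMk, Matrix.cons_val]
        rw [(xsV M i).map_neg]
        exact le_max_right _ _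
    · intro i
      rw [hμ]
      rcases max_choice (max (Real.log (xsV M i e)) 0) (Real.log (xsV M i (1 + e))) with h | h
      · rw [h]
        rcases max_choice (Real.log (xsV M i e)) 0 with h | h
        · exact ⟨0, by rw [h]; simp⟩
        · exact ⟨1, by rw [h]; simp⟩
      · refine ⟨2, ?_⟩
        rw [h]
        simp only [Matrix.cons_val]
        rw [(xsV M i).map_neg]
    · simp only [Fin.sum_univ_three, Matrix.cons_val, (xsV M _).map_neg, (xsV M _).map_one,
        Real.log_one, add_zero, Finset.sum_add_distrib, hlog1, hlog2]
      have : 0 ≤ ∑ i, μ i := Finset.sum_nonneg fun i _ => by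
        rw [hμ]; exact le_max_of_le_left (le_max_right _ _)
      linarith
  have h2 : (2 : M) ≠ 0 := two_ne_zero
  set e : M := (s + r) / 2 with he
  set f : M := (s - r) / 2 with hf
  have hef : e * f = 3 ^ n := by rw [he, hf]; field_simp; linear_combination -hr
  have hsum : e + f = s := by rw [he, hf]; field_simp; ring
  have hprod : (1 + e) * (1 + f) = 3 ^ m := by
    have : (1 + e) * (1 + f) = 1 + (e + f) + e * f := by ring
    rw [this, hsum, hef, hs]; ring
  have hn0 : ∀ k : ℤ, (3 : M) ^ k ≠ 0 := fun k => zpow_ne_zero _ (by norm_num)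
  have he0 : e ≠ 0 := by intro h; rw [h] at hef; simp at hef; exact hn0 n hef.symm
  have hf0 : f ≠ 0 := by intro h; rw [h] at hef; simp at hef; exact hn0 n hef.symm
  have h1e0 : 1 + e ≠ 0 := by intro h; rw [h] at hprod; simp at hprod; exact hn0 m hprod.symm
  have h1f0 : 1 + f ≠ 0 := by intro h; rw [h] at hprod; simp at hprod; exact hn0 m hprod.symm
  have k1 := key e f hef hsum _ (fun i => rfl)
  have k2 := key f e (by rw [mul_comm]; exact hef) (by rw [add_comm]; exact hsum) _ (fun i => rfl)
  have k3 := add_lt_add k1 k2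
  rw [← Finset.sum_add_distrib] at k3
  set g : XsPl M → ℝ := fun i => max (max (Real.log (xsV M i e)) 0) (Real.log (xsV M i (1 + e))) +
    max (max (Real.log (xsV M i f)) 0) (Real.log (xsV M i (1 + f))) with hg
  have hg0 : ∀ i, 0 ≤ g i := fun i =>
    add_nonneg (le_max_of_le_left (le_max_right _ _)) (le_max_of_le_left (le_max_right _ _))
  have hgn : ∀ i, Real.log (xsV M i (3 ^ n)) ≤ g i := fun i => by
    rw [← hef, map_mul, Real.log_mul (by simpa using he0) (by simpa using hf0)]
    exact add_le_add (le_max_of_le_left (le_max_left _ _)) (le_max_of_le_left (le_max_left _ _))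
  have hgm : ∀ i, Real.log (xsV M i (3 ^ m)) ≤ g i := fun i => by
    rw [← hprod, map_mul, Real.log_mul (by simpa using h1e0) (by simpa using h1f0)]
    exact add_le_add (le_max_right _ _) (le_max_right _ _)
  have hcard := xs_card M
  have hfr : 0 < Module.finrank ℚ M := Module.finrank_pos
  obtain ⟨σ⟩ : Nonempty (M →ₐ[ℚ] ℂ) := by
    rw [← Fintype.card_pos_iff, hcard.1]; exact hfr
  obtain ⟨τ⟩ : Nonempty (M →ₐ[ℚ] PadicAlgCl 3) := by
    rw [← Fintype.card_pos_iff, hcard.2]; exact hfr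
  have k4 : g (Sum.inl σ) + g (Sum.inr τ) ≤ ∑ i, g i := by
    rw [Fintype.sum_sum_type]
    exact add_le_add
      (Finset.single_le_sum (f := fun x => g (Sum.inl x)) (fun i _ => hg0 _) (Finset.mem_univ σ))
      (Finset.single_le_sum (f := fun x => g (Sum.inr x)) (fun i _ => hg0 _) (Finset.mem_univ τ))
  have k5 : ∑ i, g i < Real.log 3 / 4 * H + Real.log 3 / 4 * H := k3
  have a1 := hgn (Sum.inl σ)
  have a2 := hgm (Sum.inl σ)
  have a3 := hgn (Sum.inr τ)
  have a4 := hgm (Sum.inr τ)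
  rw [xs_log_inl] at a1 a2
  rw [xs_log_inr] at a3 a4
  have b1 := hg0 (Sum.inl σ)
  have b2 := hg0 (Sum.inr τ)
  have c1 : |(n : ℝ)| * Real.log 3 ≤ ∑ i, g i := by
    rcases abs_cases (n : ℝ) with h | h <;> rw [h.1] <;> linarith
  have c2 : |(m : ℝ)| * Real.log 3 ≤ ∑ i, g i := by
    rcases abs_cases (m : ℝ) with h | h <;> rw [h.1] <;> linarith
  have : H * Real.log 3 ≤ 2 * ∑ i, g i := by rw [hH]; linarith
  linarith

end CaseOne


section EisPart

open QuadraticAlgebra in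
/-- Eisenstein integers -/
abbrev XsE : Type := QuadraticAlgebra ℤ (-1) (-1)

lemma xsE_norm (x : XsE) : x.norm = x.re ^ 2 - x.re * x.im + x.im ^ 2 := by
  rw [QuadraticAlgebra.norm_def]; ring

lemma xsE_norm_nonneg (x : XsE) : 0 ≤ x.norm := by
  rw [xsE_norm]; nlinarith [sq_nonneg (x.re - x.im), sq_nonneg x.re, sq_nonneg x.im]

lemma xsE_norm_pos (x : XsE) (hx : x ≠ 0) : 0 < x.norm := by
  rcases (xsE_norm_nonneg x).lt_or_eq with h | h
  · exact h
  · exfalso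
    apply hx
    rw [xsE_norm] at h
    have h1 : x.re = 0 := by
      have : x.re ^ 2 = 0 := by nlinarith [sq_nonneg (x.re - x.im), sq_nonneg x.re, sq_nonneg x.im]
      simpa using this
    have h2 : x.im = 0 := by
      have : x.im ^ 2 = 0 := by nlinarith [sq_nonneg (x.re - x.im), sq_nonneg x.re, sq_nonneg x.im]
      simpa using this
    ext
    · simpa using h1
    · simpa using h2

instance xsE_dom : IsDomain XsE := by
  have : NoZeroDivisors XsE := ⟨by
    intro a b hab
    by_contra hc
    push Not at hc
    have h1 := xsE_norm_pos a hc.1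
    have h2 := xsE_norm_pos b hc.2
    have h3 : (a * b).norm = a.norm * b.norm := map_mul _ _ _
    rw [hab] at h3
    simp at h3
    rcases h3 with h | h <;> omega⟩
  exact NoZeroDivisors.to_isDomain _

lemma xs_round (u N : ℤ) (hN : 0 < N) : ∃ e : ℤ, |2 * (u - e * N)| ≤ N := by
  refine ⟨(2 * u + N) / (2 * N), ?_⟩
  have h1 := Int.mul_ediv_add_emod (2 * u + N) (2 * N)
  have h2 := Int.emod_nonneg (2 * u + N) (by omega : 2 * N ≠ 0)
  have h3 := Int.emod_lt_of_pos (2 * u + N) (by omega : 0 < 2 * N)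
  rw [abs_le]
  constructor <;> nlinarith

lemma xsE_div (x y : XsE) (hy : y ≠ 0) : ∃ q : XsE, (x - q * y).norm < y.norm := by
  have hN := xsE_norm_pos y hy
  set N := y.norm with hNd
  set w : XsE := x * star y with hw
  obtain ⟨e, he⟩ := xs_round w.re N hN
  obtain ⟨f, hf⟩ := xs_round w.im N hN
  refine ⟨⟨e, f⟩, ?_⟩
  have h1 : (x - ⟨e, f⟩ * y) * star y = ⟨w.re - e * N, w.im - f * N⟩ := by
    have h := QuadraticAlgebra.algebraMap_norm_eq_mul_star y
    rw [sub_mul, mul_assoc, ← h, ← hw, ← hNd]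
    ext <;> simp
  have h2 := congrArg QuadraticAlgebra.norm h1
  rw [map_mul, QuadraticAlgebra.norm_star, ← hNd, xsE_norm (⟨w.re - e * N, w.im - f * N⟩ : XsE)] at h2
  simp only at h2
  generalize w.re - e * N = a at *
  generalize w.im - f * N = b at *
  rw [abs_le] at he hf
  have h3 : a ^ 2 - a * b + b ^ 2 < N * N := by nlinarith
  rw [← h2] at h3
  exact lt_of_mul_lt_mul_right h3 hN.le

instance xsE_pid : IsPrincipalIdealRing XsE := ⟨by
  intro I
  by_cases hI : I = ⊥
  · exact ⟨0, by rw [hI]; simp⟩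
  · obtain ⟨x0, hx0, hx0'⟩ := Submodule.exists_mem_ne_zero_of_ne_bot hI
    have hex : ∃ n : ℕ, ∃ y ∈ I, y ≠ 0 ∧ y.norm.toNat = n := ⟨_, x0, hx0, hx0', rfl⟩
    classical
    obtain ⟨y, hy, hy0, hyn⟩ := Nat.find_spec hex
    refine ⟨y, le_antisymm ?_ ?_⟩
    · intro x hx
      obtain ⟨q, hq⟩ := xsE_div x y hy0
      have hr : x - q * y ∈ I := I.sub_mem hx (I.mul_mem_left _ hy)
      by_cases h0 : x - q * y = 0
      · exact Ideal.mem_span_singleton'.mpr ⟨q, (sub_eq_zero.mp h0).symm⟩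
      · exfalso
        have := Nat.find_min' hex ⟨x - q * y, hr, h0, rfl⟩
        have h2 := xsE_norm_nonneg (x - q * y)
        rw [← hyn] at this
        omega
    · exact (Ideal.span_singleton_le_iff_mem I).mpr hy⟩

lemma xs_eis_cube (a b ν : ℤ) (hab : IsCoprime a b) (hb : (3 : ℤ) ∣ b)
    (h : a ^ 2 - a * b + b ^ 2 = ν ^ 3) :
    ∃ r s : ℤ, IsCoprime r s ∧ b = 3 * r * s * (r - s) ∧ ν = r ^ 2 - r * s + s ^ 2 := by
  set α : XsE := ⟨a, b⟩ with hα
  have h3a : ¬ (3 : ℤ) ∣ a := by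
    intro h
    have := hab.isUnit_of_dvd' h hb
    rw [Int.isUnit_iff] at this
    omega
  have hcop : IsCoprime (ν ^ 3) (3 * b) := by
    have h1 : IsCoprime (ν ^ 3) b := by
      have : ν ^ 3 = a ^ 2 + b * (b - a) := by rw [← h]; ring
      rw [this]
      exact (hab.pow_left).add_mul_left_left _
    exact IsCoprime.mul_right (h1.of_isCoprime_of_dvd_right hb) h1
  have hm : α * star α = (⟨ν, 0⟩ : XsE) ^ 3 := by
    rw [← QuadraticAlgebra.algebraMap_norm_eq_mul_star, xsE_norm]
    simp only [hα, h]
    ext <;> simp [pow_succ]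
  have hcop2 : IsCoprime α (star α) := by
    obtain ⟨x, y, hxy⟩ := hcop
    refine ⟨⟨x, 0⟩ * star α + ⟨y, 0⟩ * (- ⟨1, 2⟩), ⟨y, 0⟩ * ⟨1, 2⟩, ?_⟩
    have : (⟨x, 0⟩ * star α + ⟨y, 0⟩ * (- ⟨1, 2⟩)) * α + ⟨y, 0⟩ * ⟨1, 2⟩ * star α
      = ⟨x, 0⟩ * (α * star α) + ⟨y, 0⟩ * (- ⟨1, 2⟩ * (α - star α)) := by ring
    rw [this, hm]
    ext
    · simp [hα, pow_succ, QuadraticAlgebra.re_one]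
      linear_combination hxy
    · simp [hα, pow_succ, QuadraticAlgebra.im_one]
      right; ring
  obtain ⟨d, u, hd⟩ := exists_associated_pow_of_mul_eq_pow' hcop2 hm
  set r := d.re with hr
  set s := d.im with hs
  have hd3 : d ^ 3 = ⟨r ^ 3 + s ^ 3 - 3 * r * s ^ 2, 3 * r ^ 2 * s - 3 * r * s ^ 2⟩ := by
    ext <;> simp [pow_succ, ← hr, ← hs] <;> ring
  set e := (u : XsE).re with he
  set f := (u : XsE).im with hf
  have hu : e ^ 2 - e * f + f ^ 2 = 1 := by
    have h1 := QuadraticAlgebra.isUnit_iff_norm_isUnit.mp u.isUnit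
    rw [Int.isUnit_iff] at h1
    have h2 := xsE_norm_nonneg u
    rw [xsE_norm] at h1 h2
    rcases h1 with h1 | h1
    · exact h1
    · omega
  have hnorm : ν = r ^ 2 - r * s + s ^ 2 := by
    have h1 := congrArg QuadraticAlgebra.norm hd
    rw [map_mul, map_pow, xsE_norm (u : XsE), ← he, ← hf, hu, mul_one, xsE_norm d, ← hr, ← hs,
      xsE_norm α] at h1
    simp only [hα] at h1
    rw [h] at h1
    exact ((Odd.strictMono_pow (by decide : Odd 3)).injective h1).symm
  rw [hd3] at hd
  have hre := congrArg QuadraticAlgebra.re hd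
  have him := congrArg QuadraticAlgebra.im hd
  simp [← he, ← hf, hα] at hre him
  have hf0 : f = 0 ∧ (e = 1 ∨ e = -1) := by
    have e1 : e ≤ 1 := by nlinarith [sq_nonneg (e - 2 * f)]
    have e2 : -1 ≤ e := by nlinarith [sq_nonneg (e - 2 * f)]
    have f1 : f ≤ 1 := by nlinarith [sq_nonneg (f - 2 * e)]
    have f2 : -1 ≤ f := by nlinarith [sq_nonneg (f - 2 * e)]
    obtain ⟨b', rfl⟩ := hb
    generalize r ^ 3 + s ^ 3 = R at *
    have g1 : r * s ^ 2 = r * s ^ 2 := rfl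
    generalize hP : r * s ^ 2 = P at *
    generalize hQ : r ^ 2 * s = Q at *
    rw [mul_assoc, hP, mul_assoc 3 (r ^ 2) s, hQ] at hre him
    interval_cases e <;> interval_cases f <;> first | omega | (exfalso; simp at hu)
  obtain ⟨hf0, he1⟩ := hf0
  have hrs : IsCoprime r s := by
    rw [Int.isCoprime_iff_gcd_eq_one]
    have g1 : ((Int.gcd r s : ℕ) : ℤ) ∣ r := Int.gcd_dvd_left ..
    have g2 : ((Int.gcd r s : ℕ) : ℤ) ∣ s := Int.gcd_dvd_right ..
    generalize hg : ((Int.gcd r s : ℕ) : ℤ) = g at g1 g2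
    have ga : g ∣ a := by
      rw [← hre, hf0]
      obtain ⟨x, hx⟩ := g1
      obtain ⟨y, hy⟩ := g2
      rw [hx, hy]
      exact ⟨(g ^ 2 * x ^ 3 + g ^ 2 * y ^ 3 - 3 * g ^ 2 * x * y ^ 2) * e, by ring⟩
    have gb : g ∣ b := by
      rw [← him, hf0]
      obtain ⟨x, hx⟩ := g1
      obtain ⟨y, hy⟩ := g2
      rw [hx, hy]
      exact ⟨(3 * g ^ 2 * x ^ 2 * y - 3 * g ^ 2 * x * y ^ 2) * e, by ring⟩
    have := hab.isUnit_of_dvd' ga gb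
    rw [Int.isUnit_iff] at this
    omega
  rcases he1 with he1 | he1
  · exact ⟨r, s, hrs, by rw [← him, hf0, he1]; ring, hnorm⟩
  · exact ⟨-r, -s, hrs.neg_neg, by rw [← him, hf0, he1]; ring, by rw [hnorm]; ring⟩

end EisPart


section DescentPart

lemma xs_pow_dvd {k : ℕ} {x y : ℤ} (h : (3 : ℤ) ^ k ∣ x * y) (hy : IsCoprime y 3) :
    (3 : ℤ) ^ k ∣ x :=
  IsCoprime.dvd_of_dvd_mul_right (hy.symm.pow_left) h

lemma xs_cop3 {x : ℤ} : IsCoprime x 3 ↔ ¬ (3 : ℤ) ∣ x := by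
  rw [isCoprime_comm]
  exact Int.prime_three.coprime_iff_not_dvd

lemma xs_tri (k : ℕ) (hk : 1 ≤ k) (u w μ : ℤ) (huw : IsCoprime u w) (h3 : (3 : ℤ) ∣ u + w)
    (h0 : u + w ≠ 0) (h : u * w * (u + w) = 3 ^ k * μ ^ 3) :
    3 ^ (6 * (k - 1)) ≤ 64 * (u ^ 2 + u * w + w ^ 2) := by
  have h3u : ¬ (3 : ℤ) ∣ u := by
    intro hu
    have hw : (3 : ℤ) ∣ w := by omega
    have := huw.isUnit_of_dvd' hu hw
    rw [Int.isUnit_iff] at this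
    omega
  have h3w : ¬ (3 : ℤ) ∣ w := by omega
  have hcop3 : IsCoprime (u * w) 3 := (xs_cop3.mpr h3u).mul_left (xs_cop3.mpr h3w)
  obtain ⟨x, hx⟩ : (3 : ℤ) ^ k ∣ u + w := by
    refine xs_pow_dvd (y := u * w) ?_ hcop3
    rw [mul_comm, h]
    exact dvd_mul_right _ _
  have hμ : u * (w * x) = μ ^ 3 := by
    have h3k : (3 : ℤ) ^ k ≠ 0 := by positivity
    apply mul_left_cancel₀ h3k
    rw [← h, hx]; ring
  have hus : IsCoprime u (u + w) := by
    have := huw.add_mul_left_right 1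
    rwa [mul_one, add_comm] at this
  have hws : IsCoprime w (u + w) := by
    have := huw.symm.add_mul_left_right 1
    rwa [mul_one] at this
  have hxd : x ∣ u + w := ⟨3 ^ k, by rw [hx]; ring⟩
  have hux := hus.of_isCoprime_of_dvd_right hxd
  have hwx := hws.of_isCoprime_of_dvd_right hxd
  obtain ⟨⟨g, hg⟩, _⟩ := Int.eq_pow_of_mul_eq_pow_odd (huw.mul_right hux) (by decide : Odd 3) hμ
  obtain ⟨⟨e, he⟩, _⟩ := Int.eq_pow_of_mul_eq_pow_odd (huw.symm.mul_right hwx) (by decide : Odd 3)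
    (by rw [← hμ]; ring : w * (u * x) = μ ^ 3)
  have h3g : ¬ (3 : ℤ) ∣ g := fun h => h3u (by rw [hg]; exact dvd_pow h (by norm_num))
  have h3e : ¬ (3 : ℤ) ∣ e := fun h => h3w (by rw [he]; exact dvd_pow h (by norm_num))
  obtain ⟨l, hl⟩ : (3 : ℤ) ∣ g + e := by
    have h1 : (3 : ℤ) ∣ (g + e) ^ 3 := by
      have : (g + e) ^ 3 = (u + w) + 3 * (g * e * (g + e)) := by rw [hg, he]; ring
      rw [this]
      exact dvd_add h3 (dvd_mul_right _ _)
    exact Int.prime_three.dvd_of_dvd_pow h1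
  have hge : (3 : ℤ) ^ (k - 1) ∣ g + e := by
    have hc : IsCoprime (3 * l ^ 2 - g * e) 3 := by
      rw [xs_cop3]
      intro hd
      have : (3 : ℤ) ∣ g * e := by
        have := dvd_sub (dvd_mul_right 3 (l ^ 2)) hd
        simpa using this
      rcases Int.prime_three.dvd_or_dvd this with h | h
      · exact h3g h
      · exact h3e h
    refine xs_pow_dvd (y := 3 * l ^ 2 - g * e) ?_ hc
    have h1 : 3 * ((g + e) * (3 * l ^ 2 - g * e)) = 3 * (3 ^ (k - 1) * x) := by
      have : (3 : ℤ) * 3 ^ (k - 1) = 3 ^ k := by rw [← pow_succ']; congr 1; omega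
      rw [← mul_assoc 3 (3 ^ (k - 1)), this, ← hx, hg, he]
      have : 9 * l ^ 2 = (g + e) ^ 2 := by rw [hl]; ring
      linear_combination (g + e) * this
    have h2 := mul_left_cancel₀ (by norm_num : (3 : ℤ) ≠ 0) h1
    rw [h2]
    exact dvd_mul_right _ _
  have hge0 : g + e ≠ 0 := by
    intro h
    apply h0
    have : e = - g := by omega
    rw [hg, he, this]; ring
  have habs : (3 : ℤ) ^ (k - 1) ≤ |g + e| :=
    Int.le_of_dvd (abs_pos.mpr hge0) ((dvd_abs _ _).mpr hge)
  have h6 : (3 : ℤ) ^ (6 * (k - 1)) ≤ (g + e) ^ 6 := by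
    rw [mul_comm, pow_mul]
    have := pow_le_pow_left₀ (by positivity) habs 6
    rwa [Even.pow_abs (by decide)] at this
  refine h6.trans ?_
  have hpm : (g + e) ^ 6 ≤ 32 * (g ^ 6 + e ^ 6) := by
    have a1 : (g + e) ^ 2 ≤ 2 * (g ^ 2 + e ^ 2) := by nlinarith [sq_nonneg (g - e)]
    have a2 : ((g + e) ^ 2) ^ 3 ≤ (2 * (g ^ 2 + e ^ 2)) ^ 3 := pow_le_pow_left₀ (sq_nonneg _) a1 3
    have a3 : (g ^ 2 + e ^ 2) ^ 3 ≤ 4 * ((g ^ 2) ^ 3 + (e ^ 2) ^ 3) := by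
      have p := sq_nonneg g
      have q := sq_nonneg e
      generalize g ^ 2 = P at *
      generalize e ^ 2 = Q at *
      nlinarith [mul_nonneg (add_nonneg p q) (sq_nonneg (P - Q))]
    calc (g + e) ^ 6 = ((g + e) ^ 2) ^ 3 := by ring
      _ ≤ (2 * (g ^ 2 + e ^ 2)) ^ 3 := a2
      _ = 8 * (g ^ 2 + e ^ 2) ^ 3 := by ring
      _ ≤ 8 * (4 * ((g ^ 2) ^ 3 + (e ^ 2) ^ 3)) := by linarith
      _ = _ := by ring
  have : g ^ 6 + e ^ 6 = u ^ 2 + w ^ 2 := by rw [hg, he]; ring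
  rw [this] at hpm
  nlinarith [sq_nonneg (u + w)]

lemma xs_descent (p q z : ℤ) (c : ℕ) (hpq : IsCoprime p q) (hz : z ≠ 0)
    (h : p ^ 3 + q ^ 3 + 9 * z ^ 3 = 0) (hc : (3 : ℤ) ^ c ∣ z) :
    3 ^ (54 * c) ≤ 3 ^ 36 * 2 ^ 18 * (p ^ 2 - p * q + q ^ 2) := by
  have hpos : 1 ≤ p ^ 2 - p * q + q ^ 2 := by
    have : 0 < p ^ 2 - p * q + q ^ 2 := by
      rcases (by nlinarith [sq_nonneg (p - q), sq_nonneg p, sq_nonneg q] :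
        0 ≤ p ^ 2 - p * q + q ^ 2).lt_or_eq with h1 | h1
      · exact h1
      · exfalso
        have : 9 * z ^ 3 = 0 := by linear_combination h + (p + q) * h1
        simp at this
        exact hz this
    omega
  rcases Nat.eq_zero_or_pos c with rfl | hc1
  · simp; nlinarith
  obtain ⟨w, hw⟩ := hc
  obtain ⟨b, hb⟩ : (3 : ℤ) ∣ p + q := by
    have h1 : (3 : ℤ) ∣ (p + q) ^ 3 :=
      ⟨p * q * (p + q) - 3 * z ^ 3, by linear_combination h⟩
    exact Int.prime_three.dvd_of_dvd_pow h1
  have hp : p = 3 * b - q := by omega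
  have hqb : IsCoprime q (p + q) := by
    have := hpq.symm.add_mul_left_right 1
    rwa [mul_one] at this
  have hpb : IsCoprime p (p + q) := by
    have := hpq.add_mul_left_right 1
    rwa [mul_one, add_comm] at this
  set n' : ℤ := 3 * b ^ 2 - p * q with hn'
  have hn3 : 3 * n' = p ^ 2 - p * q + q ^ 2 := by rw [hn', hp]; ring
  have hcopn : IsCoprime n' (p + q) := by
    have h1 : IsCoprime (-(p * q)) (p + q) := (hpb.mul_left hqb).neg_left
    have := h1.add_mul_left_left b
    have e : -(p * q) + (p + q) * b = n' := by rw [hn', hb]; ring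
    rwa [e] at this
  have hcn3 : IsCoprime n' 3 := hcopn.of_isCoprime_of_dvd_right ⟨b, hb⟩
  have hprod : (p + q) * n' = 3 ^ (3 * c + 1) * (- w) ^ 3 := by
    have h1 : 3 * ((p + q) * n') = 3 * (3 ^ (3 * c + 1) * (- w) ^ 3) := by
      have : 3 * ((p + q) * n') = (p + q) * (3 * n') := by ring
      rw [this, hn3]
      have hz3 : z ^ 3 = 3 ^ (3 * c) * w ^ 3 := by rw [hw]; ring
      rw [pow_succ]
      linear_combination h - 9 * hz3
    exact mul_left_cancel₀ (by norm_num) h1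
  obtain ⟨m', hm'⟩ : (3 : ℤ) ^ (3 * c + 1) ∣ p + q :=
    xs_pow_dvd (y := n') ⟨_, hprod⟩ hcn3
  have hmn : m' * n' = (- w) ^ 3 := by
    apply mul_left_cancel₀ (by positivity : (3 : ℤ) ^ (3 * c + 1) ≠ 0)
    rw [← hprod, hm']; ring
  have hcm : IsCoprime m' n' :=
    (hcopn.of_isCoprime_of_dvd_right ⟨3 ^ (3 * c + 1), by rw [hm']; ring⟩).symm
  obtain ⟨⟨μ, hμ⟩, _⟩ := Int.eq_pow_of_mul_eq_pow_odd hcm (by decide : Odd 3) hmn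
  obtain ⟨⟨ν, hν⟩, _⟩ := Int.eq_pow_of_mul_eq_pow_odd hcm.symm (by decide : Odd 3)
    (by rw [← hmn]; ring : n' * m' = (- w) ^ 3)
  have hbm : b = 3 ^ (3 * c) * m' := by
    have : 3 * b = 3 * (3 ^ (3 * c) * m') := by rw [← hb, hm']; ring
    omega
  have h3b : (3 : ℤ) ∣ b := by
    rw [hbm]
    exact Dvd.dvd.mul_right (dvd_pow_self 3 (by omega)) _
  have hcab : IsCoprime (2 * b - q) b := by
    have h1 : IsCoprime (-q) b := (hqb.of_isCoprime_of_dvd_right ⟨3, by rw [hb]; ring⟩).neg_left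
    have := h1.add_mul_left_left 2
    have e : -q + b * 2 = 2 * b - q := by ring
    rwa [e] at this
  obtain ⟨r, s, hrs, hbrs, hνrs⟩ := xs_eis_cube (2 * b - q) b ν hcab h3b (by
    rw [← hν, hn', hp]; ring)
  set k := 3 * c - 1 with hk
  have hk3 : (3 : ℤ) ^ (3 * c) = 3 * 3 ^ k := by rw [← pow_succ']; congr 1; omega
  have hrs3 : r * s * (r - s) = 3 ^ k * μ ^ 3 := by
    have : 3 * (r * s * (r - s)) = 3 * (3 ^ k * μ ^ 3) := by
      rw [← hμ, ← mul_assoc 3 (3 ^ k), ← hk3, ← hbm, hbrs]; ring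
    exact mul_left_cancel₀ (by norm_num) this
  have hb0 : b ≠ 0 := by
    intro h0
    rw [h0] at hb
    have h1 : 9 * z ^ 3 = 0 := by
      have : p = - q := by omega
      rw [this] at h; linear_combination h
    simp at h1
    exact hz h1
  have hr0 : r ≠ 0 := by rintro rfl; simp at hbrs; exact hb0 hbrs
  have hs0 : s ≠ 0 := by rintro rfl; simp at hbrs; exact hb0 hbrs
  have hd0 : r - s ≠ 0 := by intro h0; rw [h0] at hbrs; simp at hbrs; exact hb0 hbrs
  have hbound : 3 ^ (6 * (k - 1)) ≤ 64 * ν := by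
    have h3d : (3 : ℤ) ∣ r * s * (r - s) := by
      rw [hrs3]
      exact Dvd.dvd.mul_right (dvd_pow_self 3 (by omega)) _
    rcases Int.prime_three.dvd_or_dvd h3d with h3 | h3
    · rcases Int.prime_three.dvd_or_dvd h3 with h3 | h3
      · have hcc : IsCoprime s (r - s) := by
          have := hrs.symm.add_mul_left_right (-1)
          have e : r + s * -1 = r - s := by ring
          rwa [e] at this
        have := xs_tri k (by omega) s (r - s) μ hcc (by simpa using h3) (by simpa using hr0)
          (by rw [← hrs3]; ring)
        rw [hνrs]
        convert this using 2
        ring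
      · have hcc : IsCoprime r (s - r) := by
          have := hrs.add_mul_left_right (-1)
          have e : s + r * -1 = s - r := by ring
          rwa [e] at this
        have := xs_tri k (by omega) r (s - r) (-μ) hcc (by simpa using h3) (by simpa using hs0)
          (by linear_combination -hrs3)
        rw [hνrs]
        convert this using 2
        ring
    · have := xs_tri k (by omega) r (-s) (-μ) hrs.neg_right (by simpa [sub_eq_add_neg] using h3)
        (by simpa [sub_eq_add_neg] using hd0) (by linear_combination -hrs3)
      rw [hνrs]
      convert this using 2
      ring
  have h3' := pow_le_pow_left₀ (by positivity) hbound 3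
  have e1 : (3 : ℤ) ^ (54 * c) = 3 ^ 36 * (3 ^ (6 * (k - 1))) ^ 3 := by
    rw [← pow_mul, ← pow_add]; congr 1; omega
  rw [e1]
  have e2 : (64 * ν) ^ 3 = 2 ^ 18 * n' := by rw [hν]; ring
  rw [e2] at h3'
  have : n' ≤ p ^ 2 - p * q + q ^ 2 := by omega
  nlinarith

end DescentPart


section CaseTwo

variable {M : Type} [Field M] [Algebra ℚ M] [FiniteDimensional ℚ M]

theorem xs_case_two (ω θ : M) (hω : ω ^ 2 + ω + 1 = 0) (hθ : θ ^ 3 = 9) (E : ℝ) (hE : 0 ≤ E) :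
    ∃ B : ℝ, ∀ p q z : ℤ, p ≠ 0 → q ≠ 0 → ¬ (3 : ℤ) ∣ p → |z| ≤ |p| →
      p ^ 3 + q ^ 3 + 9 * z ^ 3 = 0 →
      18 * Real.log |(q : ℝ)| ≤ E + 2 * Real.log |(p : ℝ)| → Real.log |(p : ℝ)| ≤ B := by
  have : CharZero M := algebraRat.charZero M
  have h3 : 0 < Real.log 3 := Real.log_pos (by norm_num)
  have h4 : 0 < Real.log 4 := Real.log_pos (by norm_num)
  obtain ⟨B, hB⟩ := xs_U (xsO M) (xsV M) xs_liouville 2 (1 / 2) (by norm_num) (by norm_num)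
  refine ⟨max (3 * E + 6 * Real.log 3 + Real.log 4) B, fun p q z hp hq h3p hzp h hqp => ?_⟩
  by_contra hcon
  push Not at hcon
  obtain ⟨hH1, hHB⟩ := max_lt_iff.mp hcon
  set H : ℝ := Real.log |(p : ℝ)| with hH
  have hω3 : ω ^ 3 = 1 := by linear_combination (ω - 1) * hω
  have hω0 : ω ≠ 0 := by rintro rfl; simp at hω
  have hωI : IsIntegral ℤ ω := ⟨Polynomial.X ^ 3 - 1, by monicity!, by simp [hω3]⟩
  have hθI : IsIntegral ℤ θ := ⟨Polynomial.X ^ 3 - 9, by monicity!, by simp [hθ]⟩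
  have hI : ∀ n : ℤ, IsIntegral ℤ (n : M) := fun n => by
    simpa using isIntegral_algebraMap (R := ℤ) (A := M) (x := n)
  have hM : (p : M) ^ 3 + (q : M) ^ 3 + 9 * (z : M) ^ 3 = 0 := by exact_mod_cast h
  have hqM : (q : M) ≠ 0 := by exact_mod_cast hq
  have hvω : ∀ i, xsV M i ω = 1 := fun i => by
    have h1 : xsV M i ω ^ 3 = 1 := by rw [← map_pow, hω3, map_one]
    exact (pow_eq_one_iff_of_nonneg ((xsV M i).nonneg _) (by norm_num)).mp h1
  set β : Fin 3 → M := fun j => p + ω ^ (j : ℕ) * θ * z with hβ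
  set a : Fin 3 → M := fun j => ω ^ (j : ℕ) * β j with ha
  have hprod : a 0 * a 1 * a 2 = - (q : M) ^ 3 := by
    simp only [ha, hβ, Fin.val_zero, Fin.val_one, Fin.val_two]
    have e1 : (p : M) ^ 3 + 9 * z ^ 3 = - (q : M) ^ 3 := by linear_combination hM
    rw [← e1, ← hθ]
    have e3 : (p + ω ^ 0 * θ * z) * (p + ω ^ 1 * θ * z) * (p + ω ^ 2 * θ * z) =
      (p : M) ^ 3 + θ ^ 3 * z ^ 3 := by
      linear_combination (θ ^ 3 * (z : M) ^ 3) * hω3 + p ^ 2 * θ * z * hω +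
        p * θ ^ 2 * z ^ 2 * ω * hω
    calc _ = ω ^ 3 * ((p + ω ^ 0 * θ * z) * (p + ω ^ 1 * θ * z) * (p + ω ^ 2 * θ * z)) := by ring
      _ = _ := by rw [hω3, e3, one_mul]
  have ha0 : ∀ j, a j ≠ 0 := by
    have hne : a 0 * a 1 * a 2 ≠ 0 := by
      rw [hprod]; exact neg_ne_zero.mpr (pow_ne_zero _ hqM)
    intro j
    fin_cases j
    · exact left_ne_zero_of_mul (left_ne_zero_of_mul hne)
    · exact right_ne_zero_of_mul (left_ne_zero_of_mul hne)
    · exact right_ne_zero_of_mul hne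
  have haI : ∀ j, IsIntegral ℤ (a j) := fun j =>
    (hωI.pow _).mul ((hI p).add (((hωI.pow _).mul hθI).mul (hI z)))
  have hva : ∀ i j, xsV M i (a j) = xsV M i (β j) := fun i j => by
    simp only [ha]
    rw [map_mul, map_pow, hvω, one_pow, one_mul]
  have hsumβ : β 0 + β 1 + β 2 = 3 * p := by
    simp only [hβ, Fin.val_zero, Fin.val_one, Fin.val_two]
    linear_combination (θ * z) * hω
  set μ : XsPl M → ℝ := fun i => max (max (Real.log (xsV M i (a 0))) (Real.log (xsV M i (a 1))))
    (Real.log (xsV M i (a 2))) with hμ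
  have hμle : ∀ i j, Real.log (xsV M i (a j)) ≤ μ i := by
    intro i j
    fin_cases j
    · exact le_max_of_le_left (le_max_left _ _)
    · exact le_max_of_le_left (le_max_right _ _)
    · exact le_max_right _ _
  have hle_exp : ∀ i j, xsV M i (β j) ≤ Real.exp (μ i) := fun i j => by
    rw [← hva, ← Real.log_le_iff_le_exp ((xsV M i).pos (ha0 j))]
    exact hμle i j
  have hp1 : (0 : ℝ) < |(p : ℝ)| := by simpa using hp
  have hinl_int : ∀ (σ : M →ₐ[ℚ] ℂ) (n : ℤ), xsV M (Sum.inl σ) (n : M) = |(n : ℝ)| := by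
    intro σ n
    have := xsV_inl_rat σ (n : ℚ)
    simpa using this
  have hinr_int : ∀ (σ : M →ₐ[ℚ] PadicAlgCl 3) (n : ℤ), xsV M (Sum.inr σ) (n : M) =
      (padicNorm 3 (n : ℚ) : ℝ) := by
    intro σ n
    have := xsV_inr_rat σ (n : ℚ)
    simpa using this
  have hμl : ∀ σ, H ≤ μ (Sum.inl σ) := by
    intro σ
    have h1 : xsV M (Sum.inl σ) (3 * p) ≤ 3 * Real.exp (μ (Sum.inl σ)) := by
      rw [← hsumβ]
      have e1 := (xsV M (Sum.inl σ)).add_le (β 0 + β 1) (β 2)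
      have e2 := (xsV M (Sum.inl σ)).add_le (β 0) (β 1)
      linarith [hle_exp (Sum.inl σ) 0, hle_exp (Sum.inl σ) 1, hle_exp (Sum.inl σ) 2]
    rw [map_mul, hinl_int] at h1
    have e3 : xsV M (Sum.inl σ) 3 = 3 := by simpa using hinl_int σ 3
    rw [e3] at h1
    rw [hH, Real.log_le_iff_le_exp hp1]
    linarith
  have hμr : ∀ σ, - Real.log 3 ≤ μ (Sum.inr σ) := by
    intro σ
    have h1 : xsV M (Sum.inr σ) (3 * p) ≤ Real.exp (μ (Sum.inr σ)) := by
      rw [← hsumβ]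
      refine (xsV_inr_add σ _ _).trans (max_le ((xsV_inr_add σ _ _).trans (max_le ?_ ?_)) ?_)
      · exact hle_exp _ _
      · exact hle_exp _ _
      · exact hle_exp _ _
    have e4 : xsV M (Sum.inr σ) 3 = 3⁻¹ := by
      have h3' : padicNorm 3 (3 : ℚ) = 3⁻¹ := by
        have := padicNorm.padicNorm_p (p := 3) (by norm_num)
        simpa using this
      have := xsV_inr_rat σ 3
      rw [h3'] at this
      simpa using this
    have e5 : padicNorm 3 (p : ℚ) = 1 := by
      rw [padicNorm.int_eq_one_iff]; exact h3p
    rw [map_mul, hinr_int, e4, e5] at h1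
    rw [← Real.log_inv, Real.log_le_iff_le_exp (by norm_num)]
    simpa using h1
  obtain ⟨hc1, hc2⟩ := xs_card M
  have hfr : 0 < Module.finrank ℚ M := Module.finrank_pos
  set d : ℝ := (Module.finrank ℚ M : ℝ) with hd
  have hd1 : 1 ≤ d := by rw [hd]; exact_mod_cast hfr
  have hsumμ : d * (H - Real.log 3) ≤ ∑ i, μ i := by
    rw [Fintype.sum_sum_type]
    have s1 : d * H ≤ ∑ σ, μ (Sum.inl σ) := by
      have := Finset.sum_le_sum (s := Finset.univ) (fun σ _ => hμl σ)
      simpa [hc1] using this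
    have s2 : d * (- Real.log 3) ≤ ∑ σ, μ (Sum.inr σ) := by
      have := Finset.sum_le_sum (s := Finset.univ) (fun σ _ => hμr σ)
      simpa [hc2] using this
    linarith
  refine absurd (hB a H ⟨?_, ha0, ?_, ?_, μ, hμle, ?_, ?_, ?_⟩) (not_le.mpr hHB)
  · exact fun j => xsO_of_integral _ (haI j)
  · simp only [ha, hβ, Fin.val_zero, Fin.val_one, Fin.val_two]
    linear_combination (p : M) * hω + θ * z * (hω + ω * hω3)
  · intro i j
    rcases i with σ | σ
    · have hθσ : xsV M (Sum.inl σ) θ ≤ 3 := by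
        have e1 : xsV M (Sum.inl σ) θ ^ 3 = 9 := by
          rw [← map_pow, hθ]
          simpa using hinl_int σ 9
        by_contra hc
        push Not at hc
        have := pow_lt_pow_left₀ hc (by norm_num) (n := 3) (by norm_num)
        rw [e1] at this
        norm_num at this
      have hz' : |(z : ℝ)| ≤ |(p : ℝ)| := by exact_mod_cast hzp
      have e2 : xsV M (Sum.inl σ) (a j) ≤ 4 * |(p : ℝ)| := by
        rw [hva]
        refine ((xsV M (Sum.inl σ)).add_le _ _).trans ?_
        rw [map_mul, map_mul, map_pow, hvω, one_pow, one_mul, hinl_int, hinl_int]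
        have := mul_le_mul hθσ hz' (abs_nonneg _) (by norm_num)
        linarith
      have := Real.log_le_log ((xsV M (Sum.inl σ)).pos (ha0 j)) e2
      rw [Real.log_mul (by norm_num) hp1.ne'] at this
      linarith
    · have := Real.log_nonpos ((xsV M (Sum.inr σ)).nonneg _) (xsV_inr_integral σ _ (haI j))
      linarith
  · intro i
    rcases max_choice (max (Real.log (xsV M i (a 0))) (Real.log (xsV M i (a 1))))
      (Real.log (xsV M i (a 2))) with h | h
    · rcases max_choice (Real.log (xsV M i (a 0))) (Real.log (xsV M i (a 1))) with h' | h'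
      · exact ⟨0, by simp only [hμ]; rw [h, h']⟩
      · exact ⟨1, by simp only [hμ]; rw [h, h']⟩
    · exact ⟨2, by simp only [hμ]; rw [h]⟩
  · nlinarith
  · have hsj : ∀ i, ∑ j, Real.log (xsV M i (a j)) = 3 * Real.log (xsV M i q) := by
      intro i
      have hne : ∀ j, xsV M i (a j) ≠ 0 := fun j => ((xsV M i).pos (ha0 j)).ne'
      rw [Fin.sum_univ_three, ← Real.log_mul (hne _) (hne _),
        ← Real.log_mul (mul_ne_zero (hne _) (hne _)) (hne _), ← map_mul, ← map_mul, hprod,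
        (xsV M i).map_neg, map_pow, Real.log_pow]
      norm_num
    have hD : ∑ i, ∑ j, Real.log (xsV M i (a j)) ≤ d * (3 * Real.log |(q : ℝ)|) := by
      rw [Fintype.sum_sum_type]
      have s1 : ∑ σ : M →ₐ[ℚ] ℂ, ∑ j, Real.log (xsV M (Sum.inl σ) (a j)) =
          d * (3 * Real.log |(q : ℝ)|) := by
        simp only [hsj, hinl_int]
        simp [hc1, hd]
      have s2 : ∑ σ : M →ₐ[ℚ] PadicAlgCl 3, ∑ j, Real.log (xsV M (Sum.inr σ) (a j)) ≤ 0 := by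
        refine Finset.sum_nonpos fun σ _ => ?_
        rw [hsj]
        have := Real.log_nonpos ((xsV M (Sum.inr σ)).nonneg _) (xsV_inr_int σ q)
        linarith
      linarith
    have hfin : 15 * Real.log |(q : ℝ)| ≤ 2 * (H - Real.log 3) := by linarith
    have := mul_le_mul_of_nonneg_left hfin (by linarith : 0 ≤ d)
    linarith

end CaseTwo


section CaseTwoB

lemma xs_rat_aux (p q z a b : ℤ) (hpq : IsCoprime p q) (hq : q ≠ 0) (hz : z ≠ 0)
    (h : p ^ 3 + q ^ 3 + 9 * z ^ 3 = 0) (hl : (3 : ℚ) ^ a * p + 3 ^ b * q + z = 0) (hab : a < b) :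
    ¬ (3 : ℤ) ∣ p ∧ q ^ 18 ≤ 3 ^ 72 * 2 ^ 18 * (p ^ 2 - p * q + q ^ 2) ∧ 0 ≤ a ∧ a ≤ |z| ∧
      b ≤ 2 * |z| + |p| := by
  have h3p : ¬ (3 : ℤ) ∣ p := by
    intro h3
    have h3q : (3 : ℤ) ∣ q := by
      refine Int.prime_three.dvd_of_dvd_pow (n := 3) ?_
      obtain ⟨t, rfl⟩ := h3
      exact ⟨-(9 * t ^ 3) - 3 * z ^ 3, by linear_combination h⟩
    have := hpq.isUnit_of_dvd' h3 h3q
    rw [Int.isUnit_iff] at this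
    omega
  obtain ⟨k, hk⟩ : ∃ k : ℕ, b = a + k + 1 := ⟨(b - a - 1).toNat, by omega⟩
  have hn : ∀ n : ℤ, (3 : ℚ) ^ n ≠ 0 := fun n => zpow_ne_zero _ (by norm_num)
  have hl2 : (3 : ℚ) ^ a * (p + 3 ^ (k + 1) * q) + z = 0 := by
    rw [hk, add_assoc a, zpow_add₀ (by norm_num)] at hl
    have : (3 : ℚ) ^ ((k : ℤ) + 1) = 3 ^ (k + 1) := by exact_mod_cast zpow_natCast (3 : ℚ) (k + 1)
    rw [this] at hl
    linear_combination hl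
  have ha : 0 ≤ a := by
    by_contra hneg
    obtain ⟨l, hl'⟩ : ∃ l : ℕ, a = -((l : ℤ) + 1) := ⟨(-a - 1).toNat, by omega⟩
    rw [hl', zpow_neg] at hl2
    have e : (3 : ℚ) ^ ((l : ℤ) + 1) = 3 ^ (l + 1) := by exact_mod_cast zpow_natCast (3 : ℚ) (l + 1)
    rw [e] at hl2
    have hl3 : (p : ℚ) + 3 ^ (k + 1) * q + 3 ^ (l + 1) * z = 0 := by
      field_simp at hl2
      linear_combination hl2
    have hl4 : p + 3 ^ (k + 1) * q + 3 ^ (l + 1) * z = 0 := by exact_mod_cast hl3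
    exact h3p ⟨- (3 ^ k * q + 3 ^ l * z), by rw [pow_succ, pow_succ] at hl4; linear_combination hl4⟩
  obtain ⟨c, rfl⟩ := Int.eq_ofNat_of_zero_le ha
  have hl3 : (3 : ℤ) ^ c * (p + 3 ^ (k + 1) * q) + z = 0 := by
    rw [zpow_natCast] at hl2
    exact_mod_cast hl2
  have hcz : (3 : ℤ) ^ c ∣ z := ⟨-(p + 3 ^ (k + 1) * q), by linear_combination hl3⟩
  have hqd : q ∣ 9 * 27 ^ c - 1 := by
    have h1 : q ∣ p ^ 3 * (9 * 27 ^ c - 1) := by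
      have e : (27 : ℤ) ^ c = (3 ^ c) ^ 3 := by rw [← pow_mul, mul_comm, pow_mul]; norm_num
      have hz' : z = -(3 ^ c * (p + 3 ^ (k + 1) * q)) := by linear_combination hl3
      rw [e]
      refine ⟨q ^ 2 - 9 * (3 ^ c) ^ 3 * (3 * p ^ 2 * 3 ^ (k + 1) + 3 * p * (3 ^ (k + 1)) ^ 2 * q +
        (3 ^ (k + 1)) ^ 3 * q ^ 2), ?_⟩
      rw [hz'] at h
      linear_combination -h
    exact (hpq.symm.pow_right).dvd_of_dvd_mul_left h1
  have h27 : (1 : ℤ) ≤ 27 ^ c := one_le_pow₀ (by norm_num)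
  have hqle : |q| ≤ 3 ^ (3 * c + 2) := by
    have h1 := Int.le_of_dvd (by omega) ((abs_dvd q _).mpr hqd)
    have e : (3 : ℤ) ^ (3 * c + 2) = 9 * 27 ^ c := by rw [pow_add, pow_mul]; norm_num; ring
    omega
  have hq18 : q ^ 18 ≤ 3 ^ 36 * 3 ^ (54 * c) := by
    have := pow_le_pow_left₀ (abs_nonneg q) hqle 18
    rw [Even.pow_abs (by decide)] at this
    refine this.trans (le_of_eq ?_)
    rw [← pow_mul, ← pow_add]; congr 1; omega
  have hdes := xs_descent p q z c hpq hz h hcz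
  have hcle : (3 : ℤ) ^ c ≤ |z| := Int.le_of_dvd (abs_pos.mpr hz) ((dvd_abs _ _).mpr hcz)
  have hc3 : (c : ℤ) < 3 ^ c := by exact_mod_cast Nat.lt_pow_self (by norm_num : 1 < 3)
  refine ⟨h3p, ?_, ha, by omega, ?_⟩
  · calc q ^ 18 ≤ 3 ^ 36 * 3 ^ (54 * c) := hq18
      _ ≤ 3 ^ 36 * (3 ^ 36 * 2 ^ 18 * (p ^ 2 - p * q + q ^ 2)) := by gcongr
      _ = _ := by ring
  · have hk3 : ((k + 1 : ℕ) : ℤ) < 3 ^ (k + 1) := by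
      exact_mod_cast Nat.lt_pow_self (n := k + 1) (by norm_num : 1 < 3)
    have hq1 : 1 ≤ |q| := Int.one_le_abs hq
    have h3c : (1 : ℤ) ≤ 3 ^ c := one_le_pow₀ (by norm_num)
    have e1 : |3 ^ (k + 1) * q + p| ≤ |z| := by
      have : z = -(3 ^ c * (3 ^ (k + 1) * q + p)) := by linear_combination hl3
      rw [this, abs_neg, abs_mul, abs_of_pos (by positivity : (0 : ℤ) < 3 ^ c)]
      have := abs_nonneg (3 ^ (k + 1) * q + p)
      nlinarith
    have e2 : |3 ^ (k + 1) * q| ≤ |3 ^ (k + 1) * q + p| + |p| := by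
      have := abs_sub (3 ^ (k + 1) * q + p) p
      simpa using this
    rw [abs_mul, abs_of_pos (by positivity : (0 : ℤ) < 3 ^ (k + 1))] at e2
    have e3 : (3 : ℤ) ^ (k + 1) ≤ 3 ^ (k + 1) * |q| :=
      le_mul_of_one_le_right (by positivity) hq1
    push_cast at hk3
    omega

lemma xs_cube_le (p q z X : ℤ) (hp : |p| ≤ X) (hq : |q| ≤ X)
    (h : p ^ 3 + q ^ 3 + 9 * z ^ 3 = 0) : |z| ≤ X := by
  have h1 : 9 * |z| ^ 3 ≤ |p| ^ 3 + |q| ^ 3 := by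
    rw [← abs_pow, ← abs_pow, ← abs_pow]
    have : 9 * |z ^ 3| = |p ^ 3 + q ^ 3| := by
      have e : p ^ 3 + q ^ 3 = - (9 * z ^ 3) := by linear_combination h
      rw [e, abs_neg, abs_mul]; norm_num
    rw [this]
    exact abs_add_le _ _
  have hX : 0 ≤ X := (abs_nonneg p).trans hp
  have h2 := pow_le_pow_left₀ (abs_nonneg p) hp 3
  have h3 := pow_le_pow_left₀ (abs_nonneg q) hq 3
  by_contra hc
  push Not at hc
  have h4 := pow_lt_pow_left₀ hc hX (n := 3) (by norm_num)
  have h5 : 0 ≤ X ^ 3 := by positivity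
  linarith

variable {M : Type} [Field M] [Algebra ℚ M] [FiniteDimensional ℚ M]

theorem xs_rat_lt (ω θ : M) (hω : ω ^ 2 + ω + 1 = 0) (hθ : θ ^ 3 = 9) :
    ∃ B : ℝ, ∀ p q z a b : ℤ, IsCoprime p q → p ≠ 0 → q ≠ 0 → z ≠ 0 →
      p ^ 3 + q ^ 3 + 9 * z ^ 3 = 0 → (3 : ℚ) ^ a * p + 3 ^ b * q + z = 0 → a < b →
      |(a : ℝ)| ≤ B ∧ |(b : ℝ)| ≤ B := by
  have hE : 0 ≤ Real.log (3 ^ 73 * 2 ^ 18) := Real.log_nonneg (by norm_num)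
  obtain ⟨B0, hB0⟩ := xs_case_two ω θ hω hθ (Real.log (3 ^ 73 * 2 ^ 18)) hE
  refine ⟨3 * (Real.exp B0 + 3 ^ 73 * 2 ^ 18), fun p q z a b hpq hp hq hz h hl hab => ?_⟩
  obtain ⟨h3p, hq18, ha, haz, hbz⟩ := xs_rat_aux p q z a b hpq hq hz h hl hab
  suffices hX : ∃ X : ℤ, |p| ≤ X ∧ |q| ≤ X ∧ (X : ℝ) ≤ Real.exp B0 + 3 ^ 73 * 2 ^ 18 by
    obtain ⟨X, hpX, hqX, hXB⟩ := hX
    have hzX := xs_cube_le p q z X hpX hqX h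
    have hX0 : 0 ≤ X := (abs_nonneg p).trans hpX
    have a1 : |a| ≤ 3 * X := by rw [abs_of_nonneg ha]; omega
    have a2 : |b| ≤ 3 * X := by rw [abs_of_nonneg (by omega)]; omega
    have b1 : |(a : ℝ)| ≤ 3 * X := by exact_mod_cast a1
    have b2 : |(b : ℝ)| ≤ 3 * X := by exact_mod_cast a2
    exact ⟨by linarith, by linarith⟩
  rcases le_total |q| |p| with hle | hle
  · refine ⟨|p|, le_rfl, hle, ?_⟩
    have hq2 : q ^ 2 ≤ p ^ 2 := sq_le_sq.mpr hle
    have hpos : (0 : ℝ) < |(p : ℝ)| := by simpa using hp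
    have h1 : q ^ 18 ≤ 3 ^ 73 * 2 ^ 18 * p ^ 2 := by
      have : p ^ 2 - p * q + q ^ 2 ≤ 3 * p ^ 2 := by nlinarith [sq_nonneg (p + q)]
      refine hq18.trans ?_
      linarith
    have h2 : |(q : ℝ)| ^ 18 ≤ 3 ^ 73 * 2 ^ 18 * |(p : ℝ)| ^ 2 := by
      rw [Even.pow_abs (by decide), Even.pow_abs (by decide)]
      exact_mod_cast h1
    have h3 := Real.log_le_log (by have : (q : ℝ) ≠ 0 := by exact_mod_cast hq
                                   positivity) h2
    rw [Real.log_mul (by positivity) (by positivity), Real.log_pow, Real.log_pow] at h3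
    have h4 := hB0 p q z hp hq h3p (xs_cube_le p q z _ le_rfl hle h) h (by exact_mod_cast h3)
    rw [Real.log_le_iff_le_exp hpos] at h4
    push_cast
    have : (0 : ℝ) ≤ 3 ^ 73 * 2 ^ 18 := by positivity
    linarith
  · refine ⟨|q|, hle, le_rfl, ?_⟩
    have hq2 : p ^ 2 ≤ q ^ 2 := sq_le_sq.mpr hle
    have h1 : q ^ 18 ≤ 3 ^ 73 * 2 ^ 18 * q ^ 2 := by
      have : p ^ 2 - p * q + q ^ 2 ≤ 3 * q ^ 2 := by nlinarith [sq_nonneg (p + q)]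
      refine hq18.trans ?_
      linarith
    have h2 : |q| ^ 16 ≤ 3 ^ 73 * 2 ^ 18 := by
      rw [Even.pow_abs (by decide)]
      have hqp : 0 < q ^ 2 := by positivity
      refine le_of_mul_le_mul_right ?_ hqp
      calc q ^ 16 * q ^ 2 = q ^ 18 := by ring
        _ ≤ _ := h1
    have h3 : |q| ≤ |q| ^ 16 := le_self_pow₀ (Int.one_le_abs hq) (by norm_num)
    have h4 : ((|q| : ℤ) : ℝ) ≤ 3 ^ 73 * 2 ^ 18 := by exact_mod_cast h3.trans h2
    have := Real.exp_pos B0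
    linarith

theorem xs_rat_ne (ω θ : M) (hω : ω ^ 2 + ω + 1 = 0) (hθ : θ ^ 3 = 9) :
    ∃ B : ℝ, ∀ p q z a b : ℤ, IsCoprime p q → p ≠ 0 → q ≠ 0 → z ≠ 0 →
      p ^ 3 + q ^ 3 + 9 * z ^ 3 = 0 → (3 : ℚ) ^ a * p + 3 ^ b * q + z = 0 → a ≠ b →
      |(a : ℝ)| ≤ B ∧ |(b : ℝ)| ≤ B := by
  obtain ⟨B, hB⟩ := xs_rat_lt ω θ hω hθ
  refine ⟨B, fun p q z a b hpq hp hq hz h hl hab => ?_⟩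
  rcases lt_or_gt_of_ne hab with hlt | hlt
  · exact hB p q z a b hpq hp hq hz h hl hlt
  · exact (hB q p z b a hpq.symm hq hp hz (by linarith) (by linarith) hlt).symm

end CaseTwoB


section FieldCase

variable {M : Type} [Field M] [Algebra ℚ M] [FiniteDimensional ℚ M]

lemma xs_disc (c3 c2 c1 c0 s t : M) (hst : s ≠ t) (hs : c3 * s ^ 3 + c2 * s ^ 2 + c1 * s + c0 = 0)
    (ht : c3 * t ^ 3 + c2 * t ^ 2 + c1 * t + c0 = 0) :
    ((s - t) * (c3 * (2 * s + t) + c2) * (c3 * (s + 2 * t) + c2)) ^ 2 =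
      c2 ^ 2 * c1 ^ 2 - 4 * c3 * c1 ^ 3 - 4 * c2 ^ 3 * c0 - 27 * c3 ^ 2 * c0 ^ 2 +
        18 * c3 * c2 * c1 * c0 := by
  have h1 : c3 * (s ^ 2 + s * t + t ^ 2) + c2 * (s + t) + c1 = 0 := by
    apply mul_left_cancel₀ (sub_ne_zero.mpr hst)
    linear_combination hs - ht
  have hc1 : c1 = - (c3 * (s ^ 2 + s * t + t ^ 2)) - c2 * (s + t) := by linear_combination h1
  have hc0 : c0 = s * t * (c2 + c3 * (s + t)) := by
    rw [hc1] at hs; linear_combination hs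
  rw [hc1, hc0]
  ring

lemma xs_rat_int (p q a b : ℤ) (z : ℚ) (hz : z = - ((3 : ℚ) ^ a * p + 3 ^ b * q))
    (h : (p : ℚ) ^ 3 + (q : ℚ) ^ 3 + 9 * z ^ 3 = 0) : ∃ n : ℤ, (n : ℚ) = z := by
  have h1 : (3 * z) ^ 3 = ((-(3 * (p ^ 3 + q ^ 3)) : ℤ) : ℚ) := by
    push_cast; linear_combination 3 * h
  have h2 : IsIntegral ℤ (3 * z) := by
    refine IsIntegral.of_pow (n := 3) (by norm_num) ?_
    rw [h1]
    exact isIntegral_algebraMap (R := ℤ) (A := ℚ) (x := -(3 * (p ^ 3 + q ^ 3)))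
  obtain ⟨n, hn⟩ := IsIntegrallyClosed.isIntegral_iff.mp h2
  have hn' : (n : ℚ) = 3 * z := by simpa using hn
  have h3 : n ^ 3 = -(3 * (p ^ 3 + q ^ 3)) := by
    rw [← hn'] at h1
    exact_mod_cast h1
  obtain ⟨w, hw⟩ : (3 : ℤ) ∣ n := by
    refine Int.prime_three.dvd_of_dvd_pow (n := 3) ?_
    rw [h3]
    exact ⟨-(p ^ 3 + q ^ 3), by ring⟩
  refine ⟨w, ?_⟩
  rw [hw] at hn'
  push_cast at hn'
  linarith

variable [Normal ℚ M]

theorem xs_field_case (ω θ : M) (hω : ω ^ 2 + ω + 1 = 0) (hθ : θ ^ 3 = 9) :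
    ∃ B : ℝ, ∀ (a b : ℤ) (t : M), t ≠ 0 → 3 ^ a * t + 3 ^ b ≠ 0 →
      t ^ 3 + 1 = 9 * (3 ^ a * t + 3 ^ b) ^ 3 → |(a : ℝ)| ≤ B ∧ |(b : ℝ)| ≤ B := by
  have : CharZero M := algebraRat.charZero M
  obtain ⟨B1, hB1⟩ := xs_case_one (M := M)
  obtain ⟨B2, hB2⟩ := xs_rat_ne ω θ hω hθ
  have h3z : ∀ n : ℤ, (3 : M) ^ n ≠ 0 := fun n => zpow_ne_zero _ (by norm_num)
  have hpow : ∀ n : ℤ, (3 : M) ^ (3 * n + 2) = 9 * (3 ^ n) ^ 3 := fun n => by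
    rw [zpow_add₀ (by norm_num), mul_comm 3 n, zpow_mul]
    norm_cast
    ring
  have hω2 : (2 * ω + 1) ^ 2 = -3 := by linear_combination 4 * hω
  have hω1 : 2 * ω + 1 ≠ 0 := by
    intro h0
    rw [h0] at hω2
    norm_num at hω2
  have key : ∀ (a b : ℤ) (V : M),
      V ^ 2 = -27 * ((9 * (3 ^ a) ^ 3 - 9 * (3 ^ b) ^ 3 - 1) ^ 2 - 4 * (9 * (3 ^ b) ^ 3)) →
      |(a : ℝ)| ≤ B1 + 2 ∧ |(b : ℝ)| ≤ B1 + 2 := by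
    intro a b V hV
    have h1 := hB1 (3 * a + 2) (3 * b + 2) (V / (3 * (2 * ω + 1))) (by
      rw [hpow, hpow, div_pow, hV, mul_pow, hω2]
      field_simp
      norm_num
      ring)
    push_cast at h1
    have e1 : |(a : ℝ)| ≤ |3 * (a : ℝ) + 2| + 2 := by
      rcases abs_cases (a : ℝ) with h | h <;> rcases abs_cases (3 * (a : ℝ) + 2) with h' | h' <;>
        linarith
    have e2 : |(b : ℝ)| ≤ |3 * (b : ℝ) + 2| + 2 := by
      rcases abs_cases (b : ℝ) with h | h <;> rcases abs_cases (3 * (b : ℝ) + 2) with h' | h' <;>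
        linarith
    have e3 := abs_nonneg (3 * (a : ℝ) + 2)
    have e4 := abs_nonneg (3 * (b : ℝ) + 2)
    constructor <;> linarith
  refine ⟨max (B1 + 2) B2, fun a b t ht0 hne h => ?_⟩
  by_cases hab : a = b
  · subst hab
    set x : M := 3 ^ a with hx
    have ht1 : t + 1 ≠ 0 := by
      intro h0
      apply hne
      linear_combination x * h0
    have h1 : t ^ 2 - t + 1 = 9 * x ^ 3 * (t + 1) ^ 2 := by
      apply mul_left_cancel₀ ht1
      linear_combination h
    obtain ⟨r1, r2⟩ := key a a (3 * (2 * (1 - 9 * x ^ 3) * t - (1 + 2 * (9 * x ^ 3)))) (by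
      rw [← hx]
      linear_combination 36 * (1 - 9 * x ^ 3) * h1)
    exact ⟨r1.trans (le_max_left _ _), r2.trans (le_max_left _ _)⟩
  · by_cases hr : t ∈ Set.range (algebraMap ℚ M)
    · obtain ⟨t0, rfl⟩ := hr
      have ht00 : t0 ≠ 0 := by rintro rfl; simp at ht0
      have hq0 : (t0.den : ℚ) ≠ 0 := by exact_mod_cast t0.den_ne_zero
      have hpq : (t0 : ℚ) * t0.den = t0.num := Rat.mul_den_eq_num t0
      have hinj : Function.Injective (algebraMap ℚ M) := (algebraMap ℚ M).injective
      have hQ : t0 ^ 3 + 1 = 9 * (3 ^ a * t0 + 3 ^ b) ^ 3 := by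
        apply hinj
        simpa using h
      have hneQ : (3 : ℚ) ^ a * t0 + 3 ^ b ≠ 0 := by
        intro h0
        apply hne
        have := congrArg (algebraMap ℚ M) h0
        simpa using this
      set z : ℚ := - ((3 : ℚ) ^ a * t0.num + 3 ^ b * (t0.den : ℤ)) with hz
      have hz2 : z = - (t0.den * ((3 : ℚ) ^ a * t0 + 3 ^ b)) := by
        rw [hz, ← hpq]; push_cast; ring
      have hcub : (t0.num : ℚ) ^ 3 + ((t0.den : ℤ) : ℚ) ^ 3 + 9 * z ^ 3 = 0 := by
        rw [hz2, ← hpq]; push_cast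
        linear_combination (t0.den : ℚ) ^ 3 * hQ
      obtain ⟨n, hn⟩ := xs_rat_int t0.num t0.den a b z hz hcub
      have hn0 : n ≠ 0 := by
        rintro rfl
        have h0 : z = 0 := by rw [← hn]; simp
        rw [hz2, neg_eq_zero] at h0
        exact (mul_ne_zero hq0 hneQ) h0
      have hcop : IsCoprime t0.num (t0.den : ℤ) := by
        rw [Int.isCoprime_iff_gcd_eq_one]
        simpa [Int.gcd] using t0.reduced
      obtain ⟨r1, r2⟩ := hB2 t0.num t0.den n a b hcop (by simpa using ht00)
        (by exact_mod_cast t0.den_ne_zero) hn0 (by rw [← hn] at hcub; exact_mod_cast hcub)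
        (by rw [hn, hz]; ring) hab
      exact ⟨r1.trans (le_max_right _ _), r2.trans (le_max_right _ _)⟩
    · have : IsGalois ℚ M := ⟨⟩
      have hσ : ∃ σ : M ≃ₐ[ℚ] M, σ t ≠ t := by
        by_contra hc
        push Not at hc
        exact hr ((IsGalois.mem_range_algebraMap_iff_fixed (F := ℚ) (E := M) t).mpr hc)
      obtain ⟨σ, hσ⟩ := hσ
      have h2 : (σ t) ^ 3 + 1 = 9 * (3 ^ a * σ t + 3 ^ b) ^ 3 := by
        have := congrArg σ h
        have hs3 : σ 3 = 3 := map_ofNat σ 3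
        have hs9 : σ 9 = 9 := map_ofNat σ 9
        simpa [hs3, hs9] using this
      set x : M := 3 ^ a with hx
      set y : M := 3 ^ b with hy
      have hd := xs_disc (1 - 9 * x ^ 3) (-27 * x ^ 2 * y) (-27 * x * y ^ 2) (1 - 9 * y ^ 3) t (σ t)
        hσ.symm (by linear_combination h) (by linear_combination h2)
      obtain ⟨r1, r2⟩ := key a b _ (by
        rw [hd]; ring)
      exact ⟨r1.trans (le_max_left _ _), r2.trans (le_max_left _ _)⟩

end FieldCase

section Final

lemma xs_coeff_ne {F : Type} [Field F] [CharZero F] (a : ℤ) : 1 - 9 * ((3 : F) ^ a) ^ 3 ≠ 0 := by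
  intro h
  have h1 : (3 : F) ^ (3 * a + 2) = 1 := by
    rw [zpow_add₀ (by norm_num), mul_comm 3 a, zpow_mul]
    have : ((3 : F) ^ a) ^ (3 : ℤ) * 3 ^ (2 : ℤ) = 9 * ((3 : F) ^ a) ^ 3 := by
      norm_cast
      ring
    rw [this]
    linear_combination -h
  have h2' : (((3 : ℚ) ^ (3 * a + 2) : ℚ) : F) = ((1 : ℚ) : F) := by
    push_cast
    exact h1
  have h2 : (3 : ℚ) ^ (3 * a + 2) = 1 := Rat.cast_injective h2'
  rw [zpow_eq_one_iff_right₀ (by norm_num) (by norm_num)] at h2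
  omega

noncomputable def xsPoly {F : Type} [Field F] (x y : F) : Polynomial F :=
  Polynomial.C (1 - 9 * x ^ 3) * Polynomial.X ^ 3 + Polynomial.C (-27 * x ^ 2 * y) * Polynomial.X ^ 2
    + Polynomial.C (-27 * x * y ^ 2) * Polynomial.X + Polynomial.C (1 - 9 * y ^ 3)

lemma xsPoly_ne {F : Type} [Field F] (x y : F) (h : 1 - 9 * x ^ 3 ≠ 0) : xsPoly x y ≠ 0 := by
  intro h0
  have := congrArg (fun P => Polynomial.coeff P 3) h0
  unfold xsPoly at this
  generalize 1 - 9 * x ^ 3 = c3 at *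
  generalize -27 * x ^ 2 * y = c2 at *
  generalize -27 * x * y ^ 2 = c1 at *
  generalize 1 - 9 * y ^ 3 = c0 at *
  simp [Polynomial.coeff_X, Polynomial.coeff_C] at this
  exact h this

lemma xsPoly_eval {F A : Type} [Field F] [Field A] [Algebra F A] (x y : F) (t : A)
    (h : t ^ 3 + 1 = 9 * (algebraMap F A x * t + algebraMap F A y) ^ 3) :
    Polynomial.aeval t (xsPoly x y) = 0 := by
  have h9 : algebraMap F A 9 = 9 := map_ofNat _ 9
  have h27 : algebraMap F A 27 = 27 := map_ofNat _ 27
  simp [xsPoly, h9, h27]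
  linear_combination h

theorem xs_box (F₀ : Type) [Field F₀] [CharZero F₀]
    (hfg : ∃ S : Finset F₀, IntermediateField.adjoin ℚ (S : Set F₀) = ⊤) :
    ∃ B : ℝ, ∀ (a b : ℤ) (t : F₀), t ≠ 0 → 3 ^ a * t + 3 ^ b ≠ 0 →
      t ^ 3 + 1 = 9 * (3 ^ a * t + 3 ^ b) ^ 3 → |(a : ℝ)| ≤ B ∧ |(b : ℝ)| ≤ B := by
  obtain ⟨M, hfd, hno, hM, ⟨ω, hωM, hω⟩, ⟨θ, hθM, hθ⟩⟩ :=
    xs_exists_M (k := ℚ) (F := F₀) (L := AlgebraicClosure F₀) hfg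
  obtain ⟨B, hB⟩ := @xs_field_case M _ _ hfd hno ⟨ω, hωM⟩ ⟨θ, hθM⟩ (Subtype.ext (by simpa using hω))
    (Subtype.ext hθ)
  refine ⟨B, fun a b t ht hne h => ?_⟩
  have halg : IsAlgebraic ℚ t := by
    refine ⟨xsPoly ((3 : ℚ) ^ a) (3 ^ b), xsPoly_ne _ _ (xs_coeff_ne a), xsPoly_eval _ _ _ ?_⟩
    simpa using h
  have hinj : Function.Injective (algebraMap F₀ (AlgebraicClosure F₀)) :=
    (algebraMap F₀ (AlgebraicClosure F₀)).injective
  have g3 : algebraMap F₀ (AlgebraicClosure F₀) 3 = 3 := map_ofNat _ 3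
  have g9 : algebraMap F₀ (AlgebraicClosure F₀) 9 = 9 := map_ofNat _ 9
  have q9 : ((9 : M) : AlgebraicClosure F₀) = 9 := rfl
  have q3 : ∀ n : ℤ, (((3 : M) ^ n : M) : AlgebraicClosure F₀) = 3 ^ n := fun n =>
    map_zpow₀ M.val (3 : M) n
  refine hB a b ⟨algebraMap F₀ _ t, hM t halg⟩ ?_ ?_ ?_
  · intro h0
    have := congrArg Subtype.val h0
    exact ht (hinj (by simpa using this))
  · intro h0
    have := congrArg Subtype.val h0
    apply hne
    apply hinj
    simpa [g3, q3] using this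
  · apply Subtype.ext
    have := congrArg (algebraMap F₀ (AlgebraicClosure F₀)) h
    simpa [g3, g9, q3, q9] using this

end Final


/-- **Example `eg:system P`:** for `F₀` a finitely generated field of characteristic `0`,
the system `Z₁³ + Z₂³ + 9Z₃³ = 0`, `3^a Z₁ + 3^b Z₂ + Z₃ = 0` has only finitely many
solutions `(a, b, [Z₁:Z₂:Z₃])` with `a, b ∈ ℤ`, `[Z₁:Z₂:Z₃] ∈ ℙ²(F₀)` and `Z₁Z₂Z₃ ≠ 0`. -/
theorem finitely_many_nondegenerate_solutions_of_example_system
    (F₀ : Type) [Field F₀] [CharZero F₀]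
    (hfg : ∃ S : Finset F₀, IntermediateField.adjoin ℚ (S : Set F₀) = ⊤) :
    {x : ℤ × ℤ × Projectivization F₀ (Fin 3 → F₀) |
      ∃ (Z : Fin 3 → F₀) (hZ : Z ≠ 0), x.2.2 = Projectivization.mk F₀ Z hZ ∧
        Z 0 * Z 1 * Z 2 ≠ 0 ∧
        Z 0 ^ 3 + Z 1 ^ 3 + 9 * Z 2 ^ 3 = 0 ∧
        (3 : F₀) ^ x.1 * Z 0 + (3 : F₀) ^ x.2.1 * Z 1 + Z 2 = 0}.Finite := by
  classical
  obtain ⟨B, hB⟩ := xs_box F₀ hfg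
  obtain ⟨N, hN⟩ := exists_nat_ge B
  have hnz : ∀ (a b : ℤ) (t : F₀), (![t, 1, -((3 : F₀) ^ a * t + 3 ^ b)] : Fin 3 → F₀) ≠ 0 := by
    intro a b t h0
    have := congrFun h0 1
    simp at this
  have hfin : (⋃ ab ∈ (Finset.Icc (-(N : ℤ)) N ×ˢ Finset.Icc (-(N : ℤ)) N : Finset (ℤ × ℤ)),
      (fun t : F₀ => ((ab.1, ab.2, Projectivization.mk F₀ _ (hnz ab.1 ab.2 t)) :
        ℤ × ℤ × Projectivization F₀ (Fin 3 → F₀))) ''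
        ((xsPoly ((3 : F₀) ^ ab.1) (3 ^ ab.2)).rootSet F₀)).Finite := by
    refine Set.Finite.biUnion (Finset.finite_toSet _) fun ab _ => Set.Finite.image _ ?_
    exact Polynomial.rootSet_finite _ _
  refine hfin.subset ?_
  rintro ⟨a, b, P⟩ ⟨Z, hZ, hP, hne, hc, hl⟩
  simp only at hP hl
  have h0 : Z 0 ≠ 0 := left_ne_zero_of_mul (left_ne_zero_of_mul hne)
  have h1 : Z 1 ≠ 0 := right_ne_zero_of_mul (left_ne_zero_of_mul hne)
  have h2 : Z 2 ≠ 0 := right_ne_zero_of_mul hne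
  set t : F₀ := Z 0 / Z 1 with ht
  have hZ0 : Z 0 = Z 1 * t := by rw [ht]; field_simp
  have hZ2 : Z 2 = Z 1 * (-((3 : F₀) ^ a * t + 3 ^ b)) := by
    rw [hZ0] at hl; linear_combination hl
  have ht0 : t ≠ 0 := div_ne_zero h0 h1
  have hne' : (3 : F₀) ^ a * t + 3 ^ b ≠ 0 := by
    intro h; rw [h] at hZ2; simp at hZ2; exact h2 hZ2
  have heq : t ^ 3 + 1 = 9 * ((3 : F₀) ^ a * t + 3 ^ b) ^ 3 := by
    rw [hZ0, hZ2] at hc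
    apply mul_left_cancel₀ (pow_ne_zero 3 h1)
    linear_combination hc
  obtain ⟨ha, hb⟩ := hB a b t ht0 hne' heq
  have ha' : |a| ≤ N := by exact_mod_cast ha.trans hN
  have hb' : |b| ≤ N := by exact_mod_cast hb.trans hN
  rw [abs_le] at ha' hb'
  simp only [Set.mem_iUnion]
  refine ⟨(a, b), by simp only [Finset.mem_product, Finset.mem_Icc]; exact ⟨ha', hb'⟩, t, ?_, ?_⟩
  · rw [Polynomial.mem_rootSet]
    exact ⟨xsPoly_ne _ _ (xs_coeff_ne a), xsPoly_eval _ _ _ (by simpa using heq)⟩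
  · simp only [hP]
    congr 2
    rw [Projectivization.mk_eq_mk_iff']
    refine ⟨(Z 1)⁻¹, ?_⟩
    ext j
    fin_cases j
    · simp [ht]; field_simp
    · simp [h1]
    · simp only [Fin.reduceFinMk, Pi.smul_apply, smul_eq_mul, Matrix.cons_val]
      rw [hZ2]
      field_simp
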